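/- Let C = ⟨A, B, Q, q0, δ, K, col⟩ be a locally determined deterministic concurrent arena and let W ⊆ K^ω be Borel. Then the game ⟨C, W⟩ is determined: either Player A has a winning color strategy or Player B has a winning color strategy. -/

import Mathlib

open MeasureTheory
open scoped Classical

universe u

/-- The cylinder set generated by a finite word. -/
def Cyl {K : Type u} (w : List K) : Set (ℕ → K) :=
  {ρ | ∀ i : ℕ, ∀ h : i < w.length, ρ i = w.get ⟨i, h⟩}

/-- The σ-algebra on `ℕ → K` generated by cylinder sets. -/
def BorelSeq (K : Type u) : MeasurableSpace (ℕ → K) :=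
  MeasurableSpace.generateFrom {s | ∃ w : List K, s = Cyl w}

/-- A game form (given by its outcome function `ρ : S_A → S_B → O`) is determined if
for every subset `V` of outcomes, either Player A can force the outcome into `V`,
or Player B can force it out of `V`. -/
def GFDetermined {SA SB O : Type u} (ρ : SA → SB → O) : Prop :=
  ∀ V : Set O, (∃ a, ∀ b, ρ a b ∈ V) ∨ (∃ b, ∀ a, ρ a b ∉ V)

/-- The color history `col(π_0,π_1) ⋯ col(π_{n-1},π_n)` of a play prefix. -/
def colorHist {Q K : Type u} (col : Q → Q → K) (π : ℕ → Q) (n : ℕ) : List K :=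
  List.ofFn (fun i : Fin n => col (π i) (π (i + 1)))

/-- The color sequence of an infinite play. -/
def colorSeq {Q K : Type u} (col : Q → Q → K) (π : ℕ → Q) : ℕ → K :=
  fun n => col (π n) (π (n + 1))

/-- `π` is a play consistent with Player A's color strategy `sA`. -/
def PlayA {A B Q K : Type u} (q0 : Q) (δ : Q → A → B → Q) (col : Q → Q → K)
    (sA : List K → Q → A) (π : ℕ → Q) : Prop :=
  π 0 = q0 ∧ ∀ n, ∃ b, π (n + 1) = δ (π n) (sA (colorHist col π n) (π n)) b

/-- `π` is a play consistent with Player B's color strategy `sB`. -/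
def PlayB {A B Q K : Type u} (q0 : Q) (δ : Q → A → B → Q) (col : Q → Q → K)
    (sB : List K → Q → B) (π : ℕ → Q) : Prop :=
  π 0 = q0 ∧ ∀ n, ∃ a, π (n + 1) = δ (π n) a (sB (colorHist col π n) (π n))

/-- Player A's color strategy `sA` is winning for objective `W`. -/
def WinA {A B Q K : Type u} (q0 : Q) (δ : Q → A → B → Q) (col : Q → Q → K)
    (W : Set (ℕ → K)) (sA : List K → Q → A) : Prop :=
  ∀ π : ℕ → Q, PlayA q0 δ col sA π → colorSeq col π ∈ W

/-- Player B's color strategy `sB` is winning for the objective complementary to `W`. -/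
def WinB {A B Q K : Type u} (q0 : Q) (δ : Q → A → B → Q) (col : Q → Q → K)
    (W : Set (ℕ → K)) (sB : List K → Q → B) : Prop :=
  ∀ π : ℕ → Q, PlayB q0 δ col sB π → colorSeq col π ∉ W

/-!
By local determinacy, a strategy of either player in the sequential game where Player A reveals her
action before Player B chooses his transfers to the concurrent game, so the concurrent game reduces
to a sequential one, provided that the history fed to the strategy can be computed from the colors
and the current state alone. Among the action histories which produce the given colors and state and
obey the strategy, we feed the least one in the shortlex order of a well-ordering of the actions.
Along a play these least histories converge pointwise, and their limit is a sequential play that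
obeys the strategy and has the same colors.

Borel determinacy of sequential games follows Martin's inductive proof. A game is unraveled by a
covering game in which the payoff is clopen. For an open payoff, the covering game makes the players
commit, after finitely many moves, to a set `S` of positions to which player one restricts himself,
and then to an answer of player two: either the branch through a position of `S` at which player
two has already lost, or a set `R` in which she never loses. Coverings which fix longer and longer
initial segments have an inverse limit, so the unravelable payoffs form a σ-algebra.
-/

namespace BorelDeterminacy

/-! ### Game trees -/

/-- The two players of a sequential game. -/
inductive Player
  | one
  | two

/-- Player one moves at the positions of even length, player two at those of odd length. -/
def Player.Moves : Player → ℕ → Prop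
  | .one, n => Even n
  | .two, n => ¬ Even n

/-- The opponent of a player. -/
def Player.opponent : Player → Player
  | .one => .two
  | .two => .one

theorem Player.opponent_moves (P : Player) {n : ℕ} : P.opponent.Moves n ↔ ¬ P.Moves n := by
  cases P
  exacts [Iff.rfl, not_not.symm]

/-- The arena of a sequential game of infinite duration: a tree of positions without leaves, given
by the parent function. By `len_parent`, the root is its own parent. -/
structure GameTree where
  Pos : Type u
  len : Pos → ℕ
  parent : Pos → Pos
  root : Pos
  len_root : len root = 0
  eq_root : ∀ p, len p = 0 → p = root
  len_parent : ∀ p, len (parent p) = len p - 1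
  exists_child : ∀ p, ∃ c, parent c = p ∧ len c = len p + 1

namespace GameTree

section Position

variable {T : GameTree.{u}}

/-- The positions reached from `p` by one move. -/
def IsChild (T : GameTree.{u}) (p c : T.Pos) : Prop :=
  T.parent c = p ∧ T.len c = T.len p + 1

/-- The initial segment of length `m` of a position, or the position itself if it is shorter. -/
def ancestor (T : GameTree.{u}) (p : T.Pos) (m : ℕ) : T.Pos :=
  T.parent^[T.len p - m] p

theorem len_parent_iterate (p : T.Pos) (j : ℕ) : T.len (T.parent^[j] p) = T.len p - j := by
  induction j with
  | zero => rfl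
  | succ j ih => rw [Function.iterate_succ_apply', T.len_parent, ih, Nat.sub_sub]

theorem ancestor_of_len_le {p : T.Pos} {m : ℕ} (h : T.len p ≤ m) : T.ancestor p m = p := by
  rw [ancestor, Nat.sub_eq_zero_of_le h, Function.iterate_zero_apply]

theorem len_ancestor (p : T.Pos) (m : ℕ) : T.len (T.ancestor p m) = min (T.len p) m := by
  rw [ancestor, len_parent_iterate]
  omega

theorem ancestor_ancestor (p : T.Pos) {m n : ℕ} (h : m ≤ n) :
    T.ancestor (T.ancestor p n) m = T.ancestor p m := by
  rcases le_total (T.len p) n with hn | hn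
  · rw [ancestor_of_len_le hn]
  · rw [ancestor, len_ancestor, min_eq_right hn, ancestor, ancestor,
      ← Function.iterate_add_apply]
    congr 2
    omega

theorem isChild_parent {p : T.Pos} (h : 0 < T.len p) : T.IsChild (T.parent p) p :=
  ⟨rfl, by have := T.len_parent p; omega⟩

theorem isChild_ancestor_succ {p : T.Pos} {m : ℕ} (h : m < T.len p) :
    T.IsChild (T.ancestor p m) (T.ancestor p (m + 1)) := by
  refine ⟨?_, by simp only [len_ancestor]; omega⟩
  rw [ancestor, ancestor, ← Function.iterate_succ_apply' T.parent]
  congr 2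
  omega

theorem IsChild.ancestor_eq {p c : T.Pos} (h : T.IsChild p c) {m : ℕ} (hm : m ≤ T.len p) :
    T.ancestor c m = T.ancestor p m := by
  rw [ancestor, h.2, Nat.succ_sub hm, Function.iterate_succ_apply, h.1, ancestor]

instance : PartialOrder T.Pos where
  le p q := T.ancestor q (T.len p) = p
  le_refl _ := ancestor_of_len_le le_rfl
  le_trans p q r hpq hqr := by
    have hlen : T.len p ≤ T.len q := by
      have := T.len_ancestor q (T.len p)
      rw [hpq] at this
      omega
    rw [← ancestor_ancestor r hlen, hqr, hpq]
  le_antisymm p q hpq hqp := by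
    have hlen : T.len q ≤ T.len p := by
      have := T.len_ancestor p (T.len q)
      rw [hqp] at this
      omega
    rw [← hpq, ancestor_of_len_le hlen]

theorem le_def {p q : T.Pos} : p ≤ q ↔ T.ancestor q (T.len p) = p := Iff.rfl

theorem len_le_of_le {p q : T.Pos} (h : p ≤ q) : T.len p ≤ T.len q := by
  have := T.len_ancestor q (T.len p)
  rw [le_def.1 h] at this
  omega

theorem ancestor_le (p : T.Pos) (m : ℕ) : T.ancestor p m ≤ p := by
  rw [le_def, len_ancestor]
  rcases le_total (T.len p) m with h | h
  · rw [min_eq_left h, ancestor_of_len_le le_rfl, ancestor_of_len_le h]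
  · rw [min_eq_right h]

theorem IsChild.le {p c : T.Pos} (h : T.IsChild p c) : p ≤ c := by
  rw [le_def, h.ancestor_eq le_rfl, ancestor_of_len_le le_rfl]

end Position

/-! ### Plays, strategies and tree homomorphisms -/

section Play

variable {T : GameTree.{u}}

/-- An infinite play, as the sequence of its finite initial segments. -/
@[ext]
structure Play (T : GameTree.{u}) where
  toFun : ℕ → T.Pos
  map_zero : toFun 0 = T.root
  isChild : ∀ n, T.IsChild (toFun n) (toFun (n + 1))

instance : CoeFun T.Play fun _ => ℕ → T.Pos := ⟨Play.toFun⟩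

namespace Play

theorem len (x : T.Play) (n : ℕ) : T.len (x n) = n := by
  induction n with
  | zero => rw [x.map_zero, T.len_root]
  | succ n ih => rw [(x.isChild n).2, ih]

theorem ancestor_eq (x : T.Play) {m n : ℕ} (h : m ≤ n) : T.ancestor (x n) m = x m := by
  induction n, h using Nat.le_induction with
  | base => exact ancestor_of_len_le (x.len m).le
  | succ n hmn ih => rw [(x.isChild n).ancestor_eq (by rwa [x.len]), ih]

theorem monotone (x : T.Play) : Monotone x := fun m n h => by
  rw [le_def, x.len, x.ancestor_eq h]

theorem eq_of_le {x y : T.Play} {m n : ℕ} (h : y n = x n) (hmn : m ≤ n) : y m = x m := by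
  rw [← y.ancestor_eq hmn, h, x.ancestor_eq hmn]

theorem eq_of_le_apply (x : T.Play) {p : T.Pos} {n : ℕ} (h : p ≤ x n) : x (T.len p) = p := by
  rw [← x.ancestor_eq ((len_le_of_le h).trans_eq (x.len n)), le_def.1 h]

/-- The topology in which the plays through a given position form a basic open set. -/
instance : TopologicalSpace T.Play where
  IsOpen O := ∀ x ∈ O, ∃ n, ∀ y : T.Play, y n = x n → y ∈ O
  isOpen_univ x _ := ⟨0, fun _ _ => trivial⟩
  isOpen_inter O O' hO hO' x hx := by
    obtain ⟨n, hn⟩ := hO x hx.1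
    obtain ⟨n', hn'⟩ := hO' x hx.2
    exact ⟨max n n', fun y hy => ⟨hn y (eq_of_le hy (le_max_left n n')),
      hn' y (eq_of_le hy (le_max_right n n'))⟩⟩
  isOpen_sUnion F hF x := by
    rintro ⟨O, hO, hx⟩
    obtain ⟨n, hn⟩ := hF O hO x hx
    exact ⟨n, fun y hy => ⟨O, hO, hn y hy⟩⟩

theorem isOpen_of_forall_eq {O : Set T.Play} (n : ℕ)
    (h : ∀ x y : T.Play, y n = x n → x ∈ O → y ∈ O) : IsOpen O :=
  fun x hx => ⟨n, fun y hy => h x y hy hx⟩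

theorem continuous_apply_comp {X : Type*} [TopologicalSpace X] (h : T.Pos → X) (n : ℕ) :
    Continuous fun x : T.Play => h (x n) :=
  ⟨fun s _ => isOpen_of_forall_eq n fun x y hy hx => by
    rwa [Set.mem_preimage, hy]⟩

end Play

/-- A strategy, for either player: it selects a child of every position, and is obeyed by a player
at the positions where that player moves. -/
@[ext]
structure Strategy (T : GameTree.{u}) where
  toFun : T.Pos → T.Pos
  isChild : ∀ p, T.IsChild p (toFun p)

instance : CoeFun T.Strategy fun _ => T.Pos → T.Pos := ⟨Strategy.toFun⟩

noncomputable instance : Inhabited T.Strategy :=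
  ⟨⟨fun p => (T.exists_child p).choose, fun p => (T.exists_child p).choose_spec⟩⟩

/-- The strategy that moves to `f p` whenever this is a legal move. -/
noncomputable def Strategy.ofPartial (f : T.Pos → T.Pos) : T.Strategy where
  toFun p := if T.IsChild p (f p) then f p else (default : T.Strategy) p
  isChild p := by
    split_ifs with h
    exacts [h, Strategy.isChild _ p]

theorem Strategy.ofPartial_apply {f : T.Pos → T.Pos} {p : T.Pos} (h : T.IsChild p (f p)) :
    Strategy.ofPartial f p = f p :=
  if_pos h

theorem Strategy.ofPartial_congr {f g : T.Pos → T.Pos} {p : T.Pos} (h : f p = g p) :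
    Strategy.ofPartial f p = Strategy.ofPartial g p := by
  simp only [ofPartial, h]

/-- In the play `x`, player `P` obeys the strategy `s`. -/
def Play.Follows (x : T.Play) (P : Player) (s : T.Strategy) : Prop :=
  ∀ n, P.Moves n → x (n + 1) = s (x n)

/-- The game on `T` in which player one wins the plays in `O` is determined. -/
def Determined (T : GameTree.{u}) (O : Set T.Play) : Prop :=
  (∃ s : T.Strategy, ∀ x : T.Play, x.Follows .one s → x ∈ O) ∨
    ∃ s : T.Strategy, ∀ x : T.Play, x.Follows .two s → x ∉ O

end Play

/-- A length-preserving homomorphism of game trees. -/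
structure Hom (S T : GameTree.{u}) where
  map : S.Pos → T.Pos
  len_map : ∀ p, T.len (map p) = S.len p
  parent_map : ∀ p, T.parent (map p) = map (S.parent p)

namespace Hom

variable {S T : GameTree.{u}} (f : Hom S T)

theorem isChild_map {p c : S.Pos} (h : S.IsChild p c) : T.IsChild (f.map p) (f.map c) :=
  ⟨by rw [f.parent_map, h.1], by rw [f.len_map, f.len_map, h.2]⟩

/-- The continuous map between plays induced by a homomorphism. -/
def playMap : C(S.Play, T.Play) where
  toFun x :=
    ⟨fun n => f.map (x n), T.eq_root _ (by rw [f.len_map, x.len]), fun n =>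
      f.isChild_map (x.isChild n)⟩
  continuous_toFun := ⟨fun O hO x hx =>
    (hO _ hx).imp fun _ hn y hy => hn _ (congrArg f.map hy)⟩

end Hom

end GameTree

/-! ### Attractors and open games -/

section Attractor

variable {V : Type u} (step : V → V → Prop) (own : V → Prop) (U : Set V)

/-- From `v`, the player who moves at the vertices satisfying `own` forces a visit to `U` within
`o` moves, in a game on the graph `step`. -/
inductive AttractedWithin : Ordinal.{u} → V → Prop
  | target {o : Ordinal.{u}} {v : V} : v ∈ U → AttractedWithin o v
  | own {o o' : Ordinal.{u}} {v c : V} :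
      own v → step v c → o' < o → AttractedWithin o' c → AttractedWithin o v
  | opponent {o : Ordinal.{u}} {v : V} (g : V → Ordinal.{u}) :
      ¬ own v → (∀ c, step v c → g c < o) → (∀ c, step v c → AttractedWithin (g c) c) →
      AttractedWithin o v

/-- The vertices from which the player who moves where `own` holds can force a visit to `U`. -/
def attractor : Set V :=
  {v | ∃ o, AttractedWithin step own U o v}

/-- The least number of moves within which a visit to the target can be forced. -/
noncomputable def attractorRank (v : V) : Ordinal.{u} :=
  sInf {o | AttractedWithin step own U o v}

/-- A move of the attracting player which decreases the rank. -/
noncomputable def attractorMove (v : V) : V :=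
  haveI : Nonempty V := ⟨v⟩
  Classical.epsilon fun c => step v c ∧ c ∈ attractor step own U ∧
    attractorRank step own U c < attractorRank step own U v

variable {step own U} {v : V}

theorem attractedWithin_attractorRank (hv : v ∈ attractor step own U) :
    AttractedWithin step own U (attractorRank step own U v) v :=
  csInf_mem (s := {o | AttractedWithin step own U o v}) hv

theorem attractorRank_le {o : Ordinal.{u}} (h : AttractedWithin step own U o v) :
    attractorRank step own U v ≤ o :=
  csInf_le' h

theorem attractorMove_spec (hv : v ∈ attractor step own U) (hU : v ∉ U) (ho : own v) :
    step v (attractorMove step own U v) ∧ attractorMove step own U v ∈ attractor step own U ∧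
      attractorRank step own U (attractorMove step own U v) < attractorRank step own U v := by
  refine Classical.epsilon_spec (p := fun c => step v c ∧ c ∈ attractor step own U ∧
    attractorRank step own U c < attractorRank step own U v) ?_
  cases attractedWithin_attractorRank hv with
  | target h => exact absurd h hU
  | own _ hc hlt h => exact ⟨_, hc, ⟨_, h⟩, (attractorRank_le h).trans_lt hlt⟩
  | opponent _ h => exact absurd ho h

theorem step_mem_attractor (hv : v ∈ attractor step own U) (hU : v ∉ U) (ho : ¬ own v) {c : V}
    (hc : step v c) : c ∈ attractor step own U ∧
      attractorRank step own U c < attractorRank step own U v := by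
  cases attractedWithin_attractorRank hv with
  | target h => exact absurd h hU
  | own h => exact absurd h ho
  | opponent g _ hlt h => exact ⟨⟨_, h c hc⟩, (attractorRank_le (h c hc)).trans_lt (hlt c hc)⟩

theorem subset_attractor : U ⊆ attractor step own U :=
  fun _ h => ⟨0, .target h⟩

theorem step_notMem_attractor (hv : v ∉ attractor step own U) (ho : own v) {c : V}
    (hc : step v c) : c ∉ attractor step own U :=
  fun ⟨o, h⟩ => hv ⟨Order.succ o, .own ho hc (Order.lt_succ o) h⟩

theorem exists_step_notMem_attractor (hv : v ∉ attractor step own U) (ho : ¬ own v) :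
    ∃ c, step v c ∧ c ∉ attractor step own U := by
  by_contra! h
  exact hv ⟨Order.succ (⨆ c, attractorRank step own U c), .opponent (attractorRank step own U) ho
    (fun c _ => Order.lt_succ_of_le (Ordinal.le_iSup _ c))
    fun c hc => attractedWithin_attractorRank (h c hc)⟩

/-- The rank decreases along a path which avoids the target. -/
theorem exists_mem_of_attractorMove {x : ℕ → V} (h0 : x 0 ∈ attractor step own U)
    (hown : ∀ n, own (x n) → x n ∈ attractor step own U → x n ∉ U →
      x (n + 1) = attractorMove step own U (x n))
    (hopp : ∀ n, ¬ own (x n) → step (x n) (x (n + 1))) : ∃ n, x n ∈ U := by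
  by_contra! hU
  have hdecr : ∀ n, x n ∈ attractor step own U → x (n + 1) ∈ attractor step own U ∧
      attractorRank step own U (x (n + 1)) < attractorRank step own U (x n) := by
    intro n hn
    by_cases ho : own (x n)
    · rw [hown n ho hn (hU n)]
      exact (attractorMove_spec hn (hU n) ho).2
    · exact step_mem_attractor hn (hU n) ho (hopp n ho)
  have hmem : ∀ n, x n ∈ attractor step own U := Nat.rec h0 fun n hn => (hdecr n hn).1
  exact not_strictAnti_of_wellFoundedLT (fun n => attractorRank step own U (x n))
    (strictAnti_nat_of_succ_lt fun n => (hdecr n (hmem n)).2)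

end Attractor

namespace GameTree

variable {T : GameTree.{u}}

/-- The positions all of whose plays are in `O`. -/
def decided (T : GameTree.{u}) (O : Set T.Play) : Set T.Pos :=
  {p | ∀ y : T.Play, y (T.len p) = p → y ∈ O}

theorem mem_of_mem_decided {O : Set T.Play} {x : T.Play} {n : ℕ} (h : x n ∈ T.decided O) :
    x ∈ O :=
  h x (by rw [x.len])

theorem mem_decided_of_le {O : Set T.Play} {x : T.Play} {m n : ℕ} (hmn : m ≤ n)
    (h : x m ∈ T.decided O) : x n ∈ T.decided O := fun y hy => by
  rw [x.len] at hy
  exact mem_of_mem_decided (Play.eq_of_le hy hmn ▸ h)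

theorem exists_mem_decided {O : Set T.Play} (hO : IsOpen O) {x : T.Play} (hx : x ∈ O) :
    ∃ n, x n ∈ T.decided O :=
  (hO x hx).imp fun n hn y hy => hn y (by rwa [x.len] at hy)

/-- Gale–Stewart: player one wins at the positions attracted to the decided ones, player two wins
by staying away from them. -/
theorem determined_of_isOpen {O : Set T.Play} (hO : IsOpen O) : T.Determined O := by
  let own (p : T.Pos) : Prop := Player.one.Moves (T.len p)
  set Z := attractor T.IsChild own (T.decided O)
  by_cases hroot : T.root ∈ Z
  · refine Or.inl ⟨.ofPartial (attractorMove T.IsChild own (T.decided O)), fun x hx => ?_⟩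
    obtain ⟨n, hn⟩ : ∃ n, x n ∈ T.decided O := by
      refine exists_mem_of_attractorMove (by rwa [x.map_zero]) (fun n ho hZ hU => ?_)
        fun n _ => x.isChild n
      rw [hx n (x.len n ▸ ho),
        Strategy.ofPartial_apply (attractorMove_spec hZ hU ho).1]
    exact mem_of_mem_decided hn
  · have hescape : ∀ p, ∃ c, p ∉ Z → Player.two.Moves (T.len p) → T.IsChild p c ∧ c ∉ Z := by
      intro p
      by_cases hp : p ∉ Z ∧ Player.two.Moves (T.len p)
      · exact (exists_step_notMem_attractor hp.1 hp.2).imp fun _ hc _ _ => hc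
      · exact ⟨p, fun h h' => absurd ⟨h, h'⟩ hp⟩
    choose f hf using hescape
    refine Or.inr ⟨.ofPartial f, fun x hx hxO => ?_⟩
    have havoid : ∀ n, x n ∉ Z := by
      intro n
      induction n with
      | zero => rwa [x.map_zero]
      | succ n ih =>
        by_cases ho : own (x n)
        · exact step_notMem_attractor ih ho (x.isChild n)
        · have hc := hf (x n) ih ho
          rw [hx n (x.len n ▸ ho), Strategy.ofPartial_apply hc.1]
          exact hc.2
    obtain ⟨n, hn⟩ := exists_mem_decided hO hxO
    exact havoid n (subset_attractor hn)

end GameTree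

/-! ### Coverings -/

namespace GameTree

/-- A covering of `T` by `S` in the sense of Martin, which is an isomorphism on the positions of
length at most `k`: strategies of either player transfer from `S` to `T`, and the plays obeying
the transferred strategy lift to plays obeying the original one. -/
structure Covering (k : ℕ) (S T : GameTree.{u}) extends Hom S T where
  bijOn : Set.BijOn map {p | S.len p ≤ k} {p | T.len p ≤ k}
  strat : Player → S.Strategy → T.Strategy
  strat_congr : ∀ {P : Player} {s s' : S.Strategy} {p : T.Pos},
    (∀ q, S.len q ≤ T.len p → s q = s' q) → strat P s p = strat P s' p
  strat_map : ∀ {P : Player} {s : S.Strategy} {p : S.Pos},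
    S.len p < k → strat P s (map p) = map (s p)
  exists_lift : ∀ {P : Player} {s : S.Strategy} {x : T.Play}, x.Follows P (strat P s) →
    ∃ y : S.Play, y.Follows P s ∧ toHom.playMap y = x

namespace Covering

variable {k : ℕ} {R S T : GameTree.{u}}

/-- The composition of coverings. -/
def comp (c : Covering k S T) (d : Covering k R S) : Covering k R T where
  map := c.map ∘ d.map
  len_map p := by rw [Function.comp_apply, c.len_map, d.len_map]
  parent_map p := by rw [Function.comp_apply, c.parent_map, d.parent_map, Function.comp_apply]
  bijOn := c.bijOn.comp d.bijOn
  strat P s := c.strat P (d.strat P s)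
  strat_congr h := c.strat_congr fun q hq => d.strat_congr fun q' hq' => h q' (hq'.trans hq)
  strat_map {P s p} hp := by
    rw [Function.comp_apply, c.strat_map (by rwa [d.len_map]), d.strat_map hp,
      Function.comp_apply]
  exists_lift hx := by
    obtain ⟨y, hy, rfl⟩ := c.exists_lift hx
    obtain ⟨z, hz, rfl⟩ := d.exists_lift hy
    exact ⟨z, hz, rfl⟩

theorem determined (c : Covering k S T) {O : Set T.Play} (h : S.Determined (c.playMap ⁻¹' O)) :
    T.Determined O := by
  refine h.imp (fun ⟨s, hs⟩ => ⟨c.strat .one s, fun x hx => ?_⟩)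
    fun ⟨s, hs⟩ => ⟨c.strat .two s, fun x hx => ?_⟩
  all_goals
    obtain ⟨y, hy, rfl⟩ := c.exists_lift hx
    exact hs y hy

end Covering

end GameTree

/-! ### The auxiliary game for an open payoff -/

namespace GameTree

section Auxiliary

variable {T : GameTree.{u}}

/-- `R` is a quasi-strategy of `P` in the subgame `S`: a player `P` who is at a position of `R` can
remain in `R` whatever the opponent does within `S`. -/
def IsQuasiStrategy (P : Player) (S R : Set T.Pos) : Prop :=
  R ⊆ S ∧ ∀ p ∈ R, (P.Moves (T.len p) → ∃ c ∈ R, T.IsChild p c) ∧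
    (¬ P.Moves (T.len p) → ∀ c ∈ S, T.IsChild p c → c ∈ R)

theorem isQuasiStrategy_univ (P : Player) : IsQuasiStrategy P Set.univ (Set.univ : Set T.Pos) :=
  ⟨subset_rfl, fun p _ => ⟨fun _ => (T.exists_child p).imp fun _ hc => ⟨trivial, hc⟩,
    fun _ _ _ _ => trivial⟩⟩

/-- The positions comparable with `u`. -/
def branch (u : T.Pos) : Set T.Pos :=
  {p | u ≤ p ∨ p ≤ u}

theorem Play.mem_branch (x : T.Play) (m n : ℕ) : x n ∈ branch (x m) :=
  (le_total m n).imp (fun h => x.monotone h) fun h => x.monotone h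

theorem Play.eq_of_mem_branch (x : T.Play) {p : T.Pos} {m : ℕ} (h : p ∈ branch (x m))
    (hp : T.len p ≤ m) : p = x (T.len p) := by
  rcases h with h | h
  · have hlen : T.len p = m := hp.antisymm (by simpa only [x.len] using len_le_of_le h)
    rw [le_def, x.len, ancestor_of_len_le hp] at h
    rw [h, x.len]
  · exact (x.eq_of_le_apply h).symm

theorem exists_isChild_mem_branch {u p : T.Pos} (hp : p ∈ branch u) :
    ∃ c ∈ branch u, T.IsChild p c := by
  by_cases h : u ≤ p
  · obtain ⟨c, hc⟩ := T.exists_child p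
    exact ⟨c, .inl (h.trans (IsChild.le hc)), hc⟩
  · have hpu := hp.resolve_left h
    have hlt : T.len p < T.len u := by
      by_contra! hlen
      rw [le_def, ancestor_of_len_le hlen] at hpu
      exact h hpu.le
    have hchild := isChild_ancestor_succ hlt
    rw [le_def.1 hpu] at hchild
    exact ⟨_, .inr (ancestor_le u _), hchild⟩

/-- A legal answer of player two to the set `S`: to claim that a position of `S ∩ E` will be
reached, or to commit to a quasi-strategy in `S` which avoids `E`. -/
def IsAnswer (E S R : Set T.Pos) : Prop :=
  (∃ u ∈ S ∩ E, R = branch u) ∨ (IsQuasiStrategy .two S R ∧ Disjoint R E)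

variable {E S R : Set T.Pos}

theorem IsAnswer.exists_isChild_mem (hR : IsAnswer E S R)
    (hS : IsQuasiStrategy .one Set.univ S) {p : T.Pos} (hp : p ∈ R) :
    ∃ c ∈ R, T.IsChild p c := by
  rcases hR with ⟨u, -, rfl⟩ | ⟨hR, -⟩
  · exact exists_isChild_mem_branch hp
  · by_cases hmoves : Player.two.Moves (T.len p)
    · exact (hR.2 p hp).1 hmoves
    · obtain ⟨c, hcS, hc⟩ := (hS.2 p (hR.1 hp)).1 (not_not.1 hmoves)
      exact ⟨c, (hR.2 p hp).2 hmoves c hcS hc, hc⟩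

theorem exists_isAnswer (hS : IsQuasiStrategy .one Set.univ S) {c : T.Pos} (hc : c ∈ S) :
    ∃ R, IsAnswer E S R ∧ c ∈ R := by
  by_cases hu : ∃ u ∈ S ∩ E, c ∈ branch u
  · obtain ⟨u, hu, hcu⟩ := hu
    exact ⟨branch u, .inl ⟨u, hu, rfl⟩, hcu⟩
  · refine ⟨{p ∈ S | c ≤ p}, .inr ⟨⟨fun p hp => hp.1, fun p hp => ⟨fun hmoves => ?_,
      fun _ d hd hpd => ⟨hd, hp.2.trans hpd.le⟩⟩⟩, ?_⟩, hc, le_rfl⟩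
    · obtain ⟨d, hd⟩ := T.exists_child p
      exact ⟨d, ⟨(hS.2 p hp.1).2 hmoves d trivial hd, hp.2.trans (IsChild.le hd)⟩, hd⟩
    · exact Set.disjoint_left.2 fun p hp hpE => hu ⟨p, ⟨hp.1, hpE⟩, .inr hp.2⟩

/-- The position `p` respects the sets `S`, announced by player one with the move to length
`N + 1`, and `R`, answered by player two with the move to length `N + 2`. -/
def Valid (N : ℕ) (E : Set T.Pos) (p : T.Pos) (S R : Set T.Pos) : Prop :=
  (N < T.len p → IsQuasiStrategy .one Set.univ S ∧ T.ancestor p (N + 1) ∈ S) ∧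
    (N + 1 < T.len p → IsAnswer E S R ∧
      ∀ m, N + 1 < m → m ≤ T.len p → T.ancestor p m ∈ R)

variable {N : ℕ} {p c : T.Pos} {S' R' : Set T.Pos}

theorem Valid.of_len_le (h : T.len p ≤ N) : Valid N E p S R :=
  ⟨fun _ => by omega, fun _ => by omega⟩

theorem Valid.congr (h : Valid N E p S R) (hS : N < T.len p → S = S')
    (hR : N + 1 < T.len p → R = R') : Valid N E p S' R' :=
  ⟨fun hp => hS hp ▸ h.1 hp, fun hp => hS (by omega) ▸ hR hp ▸ h.2 hp⟩

theorem Valid.of_isChild (h : Valid N E c S R) (hc : T.IsChild p c) : Valid N E p S R := by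
  have hlen := hc.2
  refine ⟨fun hp => ?_, fun hp => ?_⟩
  · rw [← hc.ancestor_eq (by omega)]
    exact h.1 (by omega)
  · refine ⟨(h.2 (by omega)).1, fun m hm hm' => ?_⟩
    rw [← hc.ancestor_eq hm']
    exact (h.2 (by omega)).2 m hm (by omega)

theorem Valid.extend (h : Valid N E p S R) (hc : T.IsChild p c)
    (hS : T.len p = N → IsQuasiStrategy .one Set.univ S ∧ c ∈ S)
    (hR : N < T.len p → IsAnswer E S R ∧ c ∈ R) : Valid N E c S R := by
  have hlen := hc.2
  refine ⟨fun hcN => ?_, fun hcN => ⟨(hR (by omega)).1, fun m hm hm' => ?_⟩⟩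
  · rcases (show N ≤ T.len p by omega).eq_or_lt with hp | hp
    · rw [ancestor_of_len_le (by omega)]
      exact hS hp.symm
    · rw [hc.ancestor_eq (by omega)]
      exact h.1 hp
  · rcases hm'.eq_or_lt with rfl | hmlt
    · rw [ancestor_of_len_le le_rfl]
      exact (hR (by omega)).2
    · rw [hc.ancestor_eq (by omega)]
      exact (h.2 (by omega)).2 m hm (by omega)

theorem Valid.exists_extend (h : Valid N E p S R) (hN : Even N) :
    ∃ c S' R', T.IsChild p c ∧ Valid N E c S' R' ∧ (N < T.len p → S' = S) ∧
      (N + 1 < T.len p → R' = R) := by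
  rcases lt_trichotomy (T.len p) N with hp | hp | hp
  · obtain ⟨c, hc⟩ := T.exists_child p
    exact ⟨c, S, R, hc, .of_len_le (by rw [hc.2]; omega), fun _ => rfl, fun _ => rfl⟩
  · obtain ⟨c, hc⟩ := T.exists_child p
    exact ⟨c, Set.univ, R, hc, Valid.extend (.of_len_le hp.le) hc
      (fun _ => ⟨isQuasiStrategy_univ _, trivial⟩) fun _ => by omega, fun _ => by omega,
      fun _ => rfl⟩
  · obtain ⟨hS, hpS⟩ := h.1 hp
    rcases (show N + 1 ≤ T.len p from hp).eq_or_lt with hp1 | hp1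
    · rw [ancestor_of_len_le hp1.ge] at hpS
      obtain ⟨c, hc⟩ := T.exists_child p
      have htwo : ¬ Even (T.len p) := by simpa only [← hp1, Nat.even_add_one, not_not] using hN
      obtain ⟨R', hR', hcR'⟩ :=
        exists_isAnswer (E := E) hS ((hS.2 p hpS).2 htwo c trivial hc)
      exact ⟨c, S, R', hc, (h.congr (fun _ => rfl) fun _ => by omega).extend hc
        (fun _ => by omega) fun _ => ⟨hR', hcR'⟩, fun _ => rfl, fun _ => by omega⟩
    · obtain ⟨hR, hpR⟩ := h.2 hp1
      have hp_mem := hpR (T.len p) hp1 le_rfl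
      rw [ancestor_of_len_le le_rfl] at hp_mem
      obtain ⟨c, hcR, hc⟩ := hR.exists_isChild_mem hS hp_mem
      exact ⟨c, S, R, hc, h.extend hc (fun _ => by omega) fun _ => ⟨hR, hcR⟩, fun _ => rfl,
        fun _ => rfl⟩

/-- The positions of the auxiliary game: positions of `T` together with the sets announced so far,
which are empty as long as they have not been announced. -/
@[ext]
structure AuxPos (N : ℕ) (E : Set T.Pos) where
  pos : T.Pos
  region : Set T.Pos
  answer : Set T.Pos
  valid : Valid N E pos region answer
  region_eq_empty : T.len pos ≤ N → region = ∅
  answer_eq_empty : T.len pos ≤ N + 1 → answer = ∅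

theorem AuxPos.pos_mem_answer (z : AuxPos N E) (h : N + 1 < T.len z.pos) : z.pos ∈ z.answer := by
  have := (z.valid.2 h).2 (T.len z.pos) h le_rfl
  rwa [ancestor_of_len_le le_rfl] at this

/-- The auxiliary position over `p` which retains from `S` and `R` what is announced at `p`. -/
noncomputable def annotate (p : T.Pos) (S R : Set T.Pos) (h : Valid N E p S R) : AuxPos N E where
  pos := p
  region := if N < T.len p then S else ∅
  answer := if N + 1 < T.len p then R else ∅
  valid := h.congr (fun hp => (if_pos hp).symm) fun hp => (if_pos hp).symm
  region_eq_empty hp := if_neg hp.not_gt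
  answer_eq_empty hp := if_neg hp.not_gt

theorem AuxPos.eq_annotate {z : AuxPos N E} {h : Valid N E c S R} (hpos : z.pos = c)
    (hS : N < T.len c → z.region = S) (hR : N + 1 < T.len c → z.answer = R) :
    z = annotate c S R h := by
  subst hpos
  refine AuxPos.ext rfl ?_ ?_
  · change z.region = if N < T.len z.pos then S else ∅
    split_ifs with hN
    exacts [hS hN, z.region_eq_empty (not_lt.1 hN)]
  · change z.answer = if N + 1 < T.len z.pos then R else ∅
    split_ifs with hN
    exacts [hR hN, z.answer_eq_empty (not_lt.1 hN)]

theorem annotate_region {h : Valid N E p S R} (hp : N < T.len p) :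
    (annotate p S R h).region = S :=
  if_pos hp

theorem annotate_answer {h : Valid N E p S R} (hp : N + 1 < T.len p) :
    (annotate p S R h).answer = R :=
  if_pos hp

theorem AuxPos.valid_parent (z : AuxPos N E) : Valid N E (T.parent z.pos) z.region z.answer := by
  rcases Nat.eq_zero_or_pos (T.len z.pos) with h | h
  · exact .of_len_le (by have := T.len_parent z.pos; omega)
  · exact z.valid.of_isChild (isChild_parent h)

theorem annotate_parent {z w : AuxPos N E} (hpos : T.parent z.pos = w.pos)
    (hS : N < T.len w.pos → z.region = w.region)
    (hR : N + 1 < T.len w.pos → z.answer = w.answer) :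
    annotate (T.parent z.pos) z.region z.answer z.valid_parent = w :=
  (AuxPos.eq_annotate hpos.symm (fun h => (hS (hpos ▸ h)).symm)
    fun h => (hR (hpos ▸ h)).symm).symm

/-- Martin's auxiliary game, in which player one announces a quasi-strategy when moving to length
`N + 1` and player two answers it when moving to length `N + 2`. -/
noncomputable def auxTree (hN : Even N) (E : Set T.Pos) : GameTree.{u} where
  Pos := AuxPos N E
  len z := T.len z.pos
  parent z := annotate (T.parent z.pos) z.region z.answer z.valid_parent
  root := annotate T.root ∅ ∅ (.of_len_le (by rw [T.len_root]; omega))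
  len_root := T.len_root
  eq_root z hz := AuxPos.eq_annotate (T.eq_root _ hz)
    (fun h => absurd h (by rw [T.len_root]; omega)) fun h => absurd h (by rw [T.len_root]; omega)
  len_parent z := T.len_parent z.pos
  exists_child z := by
    obtain ⟨c, S, R, hc, h, hS, hR⟩ := z.valid.exists_extend hN
    refine ⟨annotate c S R h, annotate_parent hc.1 (fun hz => ?_) fun hz => ?_, hc.2⟩
    · rw [annotate_region (hz.trans (by rw [hc.2]; omega)), hS hz]
    · rw [annotate_answer (hz.trans (by rw [hc.2]; omega)), hR hz]

/-- The projection of the auxiliary game which forgets the announced sets. -/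
noncomputable def auxHom (hN : Even N) (E : Set T.Pos) : Hom (auxTree hN E) T where
  map := AuxPos.pos
  len_map _ := rfl
  parent_map _ := rfl

variable {hN : Even N}

theorem region_eq_of_isChild {z w : AuxPos N E} (h : (auxTree hN E).IsChild z w)
    (hz : N < T.len z.pos) : w.region = z.region := by
  obtain rfl := h.1
  exact (annotate_region (h := w.valid_parent) hz).symm

theorem answer_eq_of_isChild {z w : AuxPos N E} (h : (auxTree hN E).IsChild z w)
    (hz : N + 1 < T.len z.pos) : w.answer = z.answer := by
  obtain rfl := h.1
  exact (annotate_answer (h := w.valid_parent) hz).symm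

end Auxiliary

section Transfer

variable {T : GameTree.{u}} {N : ℕ} {hN : Even N} {E : Set T.Pos} {P : Player}

/-- What `s` plays at the position `p` if `S` and `R` have been announced; it is the root, a junk
value, if `p` does not respect `S` and `R`. -/
noncomputable def response (s : (auxTree hN E).Strategy) (p : T.Pos) (S R : Set T.Pos) :
    AuxPos N E :=
  if h : Valid N E p S R then s (annotate p S R h) else (auxTree hN E).root

section Response

variable {s s' : (auxTree hN E).Strategy} {p : T.Pos} {S S' R R' : Set T.Pos}

theorem response_eq (h : Valid N E p S R) : response s p S R = s (annotate p S R h) :=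
  dif_pos h

theorem response_eq_root (h : ¬ Valid N E p S R) : response s p S R = (auxTree hN E).root :=
  dif_neg h

theorem isChild_response (h : Valid N E p S R) : T.IsChild p (response s p S R).pos := by
  rw [response_eq h]
  exact (auxHom hN E).isChild_map (s.isChild (annotate p S R h))

theorem region_response (h : Valid N E p S R) (hp : N < T.len p) :
    (response s p S R).region = S := by
  rw [response_eq h, region_eq_of_isChild (s.isChild (annotate p S R h)) hp, annotate_region hp]

theorem answer_response (h : Valid N E p S R) (hp : N + 1 < T.len p) :
    (response s p S R).answer = R := by
  rw [response_eq h, answer_eq_of_isChild (s.isChild (annotate p S R h)) hp, annotate_answer hp]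

theorem response_congr (hS : N < T.len p → S = S') (hR : N + 1 < T.len p → R = R') :
    response s p S R = response s p S' R' := by
  by_cases h : Valid N E p S R
  · rw [response_eq h, response_eq (h.congr hS hR)]
    exact congrArg s (AuxPos.eq_annotate rfl (fun hp => (annotate_region hp).trans (hS hp))
      fun hp => (annotate_answer hp).trans (hR hp))
  · have h' : ¬ Valid N E p S' R' := fun h' =>
      h (h'.congr (fun hp => (hS hp).symm) fun hp => (hR hp).symm)
    rw [response_eq_root h, response_eq_root h']

theorem response_congr_strategy {n : ℕ} (h : ∀ z, (auxTree hN E).len z ≤ n → s z = s' z)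
    (hp : T.len p ≤ n) : response s p = response s' p := by
  funext S R
  by_cases hv : Valid N E p S R
  · rw [response_eq hv, response_eq hv, h (annotate p S R hv) hp]
  · rw [response_eq_root hv, response_eq_root hv]

end Response

/-- The play of the auxiliary game over `x` in which `S` and `R` are announced. -/
noncomputable def annotatePlay (x : T.Play) (S R : Set T.Pos) (h : ∀ n, Valid N E (x n) S R) :
    (auxTree hN E).Play where
  toFun n := annotate (x n) S R (h n)
  map_zero := (auxTree hN E).eq_root _ (x.len 0)
  isChild n := by
    have hlen := (x.isChild n).2
    refine ⟨annotate_parent (x.isChild n).1 (fun hn => ?_) fun hn => ?_, hlen⟩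
    · exact (annotate_region (hlen ▸ Nat.lt_succ_of_lt hn)).trans
        (annotate_region (p := x n) hn).symm
    · exact (annotate_answer (hlen ▸ Nat.lt_succ_of_lt hn)).trans
        (annotate_answer (p := x n) hn).symm

/-- The sets `S` and `R` can be announced along the play `x` by a player `P` who obeys `s` and an
opponent of `P`. -/
structure Coherent (P : Player) (s : (auxTree hN E).Strategy) (x : T.Play)
    (S R : Set T.Pos) : Prop where
  quasi : IsQuasiStrategy .one Set.univ S
  mem : x (N + 1) ∈ S
  answer : IsAnswer E S R
  region_response : P.Moves N → (response s (x N) ∅ ∅).region = S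
  answer_response : P.Moves (N + 1) → (response s (x (N + 1)) S ∅).answer = R

namespace Coherent

variable {s : (auxTree hN E).Strategy} {x : T.Play} {S R : Set T.Pos}

theorem valid (h : Coherent P s x S R) {n : ℕ} (hR : ∀ m, N + 1 < m → m ≤ n → x m ∈ R) :
    Valid N E (x n) S R := by
  refine ⟨fun hn => ⟨h.quasi, ?_⟩, fun _ => ⟨h.answer, fun m hm hmn => ?_⟩⟩ <;> rw [x.len] at *
  · rw [x.ancestor_eq hn]
    exact h.mem
  · rw [x.ancestor_eq hmn]
    exact hR m hm hmn

theorem region_response_eq (h : Coherent P s x S R) {n : ℕ} (hv : Valid N E (x n) S R)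
    (hP : P.Moves n) (hn : N ≤ n) : (response s (x n) S R).region = S := by
  rcases hn.eq_or_lt with rfl | hlt
  · rw [← response_congr (S := ∅) (R := ∅) (by simp only [x.len]; omega)
      (by simp only [x.len]; omega), h.region_response hP]
  · exact GameTree.region_response hv (by rwa [x.len])

theorem answer_response_eq (h : Coherent P s x S R) {n : ℕ} (hv : Valid N E (x n) S R)
    (hP : P.Moves n) (hn : N + 1 ≤ n) : (response s (x n) S R).answer = R := by
  rcases hn.eq_or_lt with rfl | hlt
  · rw [← response_congr (S := S) (R := ∅) (fun _ => rfl) (by simp only [x.len]; omega),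
      h.answer_response hP]
  · exact GameTree.answer_response hv (by rwa [x.len])

theorem pos_response_mem (h : Coherent P s x S R) {n : ℕ} (hv : Valid N E (x n) S R)
    (hP : P.Moves n) (hn : N + 1 ≤ n) : (response s (x n) S R).pos ∈ R := by
  have hmem := AuxPos.pos_mem_answer (response s (x n) S R)
    (by rw [(isChild_response hv).2, x.len]; omega)
  rwa [h.answer_response_eq hv hP hn] at hmem

theorem exists_lift_of_valid (h : Coherent P s x S R) (hv : ∀ n, Valid N E (x n) S R)
    (hx : ∀ n, P.Moves n → x (n + 1) = (response s (x n) S R).pos) :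
    ∃ y : (auxTree hN E).Play, y.Follows P s ∧ (auxHom hN E).playMap y = x := by
  refine ⟨annotatePlay x S R hv, fun n hP => ?_, rfl⟩
  have hresponse : response s (x n) S R = annotate (x (n + 1)) S R (hv (n + 1)) :=
    AuxPos.eq_annotate (hx n hP).symm
      (fun hn => h.region_response_eq (hv n) hP (by rw [x.len] at hn; omega))
      fun hn => h.answer_response_eq (hv n) hP (by rw [x.len] at hn; omega)
  exact hresponse.symm.trans (response_eq (hv n))

theorem exists_lift (h : Coherent P s x S R)
    (hlow : ∀ n ≤ N, P.Moves n → x (n + 1) = (response s (x n) ∅ ∅).pos)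
    (hhigh : ∀ n > N, P.Moves n → Valid N E (x n) S R →
      x (n + 1) = (response s (x n) S R).pos)
    (hopp : ∀ n > N, ¬ P.Moves n → (N + 1 < n → x n ∈ R) → x (n + 1) ∈ R) :
    ∃ y : (auxTree hN E).Play, y.Follows P s ∧ (auxHom hN E).playMap y = x := by
  have hR : ∀ n m, N + 1 < m → m ≤ n → x m ∈ R := by
    intro n
    induction n with
    | zero => intros; omega
    | succ n ih =>
      intro m hm hmn
      rcases hmn.eq_or_lt with rfl | hlt
      · by_cases hP : P.Moves n
        · have hv := h.valid ih
          rw [hhigh n (by omega) hP hv]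
          exact h.pos_response_mem hv hP (by omega)
        · exact hopp n (by omega) hP fun hn => ih n hn le_rfl
      · exact ih m hm (by omega)
  refine h.exists_lift_of_valid (fun n => h.valid (hR n)) fun n hP => ?_
  rcases le_or_gt n N with hn | hn
  · rw [hlow n hn hP, response_congr] <;> simp only [x.len] <;> omega
  · exact hhigh n hn hP (h.valid (hR n))

/-- Before the play reaches `x m`, the moves of `P` are forced by the announced branch. -/
theorem exists_lift_of_branch {m : ℕ} (h : Coherent P s x S (branch (x m)))
    (hlow : ∀ n ≤ N, P.Moves n → x (n + 1) = (response s (x n) ∅ ∅).pos)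
    (hhigh : ∀ n > N, m ≤ n → P.Moves n → Valid N E (x n) S (branch (x m)) →
      x (n + 1) = (response s (x n) S (branch (x m))).pos) :
    ∃ y : (auxTree hN E).Play, y.Follows P s ∧ (auxHom hN E).playMap y = x := by
  refine h.exists_lift hlow (fun n hn hP hv => ?_) fun n _ _ _ => x.mem_branch m (n + 1)
  rcases le_or_gt m n with hmn | hmn
  · exact hhigh n hn hmn hP hv
  · have hlen : T.len (response s (x n) S (branch (x m))).pos = n + 1 := by
      rw [(isChild_response hv).2, x.len]
    rw [x.eq_of_mem_branch (h.pos_response_mem hv hP hn) (by omega), hlen]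

end Coherent

/-- The legal moves which do not leave `S`. -/
def IsChildIn (S : Set T.Pos) (p c : T.Pos) : Prop :=
  T.IsChild p c ∧ (p ∈ S → c ∈ S)

/-- A plan for the player who transfers a strategy of the auxiliary game. She tries to reach
`target` without leaving `arena`. Once she has reached `u` there, she pretends that the set
`claim u` was announced and was answered by the branch of `u`. Outside the attractor of the target,
she pretends that `region` and `answer` were announced. -/
structure Plan (T : GameTree.{u}) where
  arena : Set T.Pos
  target : Set T.Pos
  claim : T.Pos → Set T.Pos
  region : Set T.Pos
  answer : Set T.Pos

namespace Plan

variable (D : Plan T)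

/-- The positions from which `P` can force the plan to reach its target. -/
def attracted (P : Player) : Set T.Pos :=
  attractor (IsChildIn D.arena) (fun p => P.Moves (T.len p)) D.target

/-- The move of `P` at `p` according to the plan. -/
noncomputable def move (P : Player) (s : (auxTree hN E).Strategy) (p : T.Pos) : T.Pos :=
  if h : ∃ v, IsLeast {u ∈ D.target | u ≤ p} v then
    (response s p (D.claim h.choose) (branch h.choose)).pos
  else if p ∈ D.attracted P then
    attractorMove (IsChildIn D.arena) (fun p => P.Moves (T.len p)) D.target p
  else (response s p D.region D.answer).pos

variable {D} {s : (auxTree hN E).Strategy} {x : T.Play}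

theorem move_of_isLeast {p v : T.Pos} (h : IsLeast {u ∈ D.target | u ≤ p} v) :
    D.move P s p = (response s p (D.claim v) (branch v)).pos := by
  have hex : ∃ v, IsLeast {u ∈ D.target | u ≤ p} v := ⟨v, h⟩
  rw [move, dif_pos hex, hex.choose_spec.unique h]

theorem exists_isLeast (h : ∃ n, x n ∈ D.target) :
    ∃ m, x m ∈ D.target ∧ ∀ n ≥ m, IsLeast {u ∈ D.target | u ≤ x n} (x m) := by
  refine ⟨Nat.find h, Nat.find_spec h, fun n hn =>
    ⟨⟨Nat.find_spec h, x.monotone hn⟩, fun u hu => ?_⟩⟩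
  have hu' := x.eq_of_le_apply hu.2
  rw [← hu']
  exact x.monotone (Nat.find_min' h (hu'.symm ▸ hu.1))

theorem move_of_notMem {n : ℕ} (h : ∀ n, x n ∉ D.target) :
    D.move P s (x n) = if x n ∈ D.attracted P then
        attractorMove (IsChildIn D.arena) (fun p => P.Moves (T.len p)) D.target (x n)
      else (response s (x n) D.region D.answer).pos := by
  refine dif_neg fun ⟨u, hu, _⟩ => h (T.len u) ?_
  rw [x.eq_of_le_apply hu.2]
  exact hu.1

/-- The conditions under which a play which follows the plan lifts to the auxiliary game. -/
structure IsSound (D : Plan T) (P : Player) (s : (auxTree hN E).Strategy) (x : T.Play) :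
    Prop where
  coherent_claim : ∀ m, x m ∈ D.target → Coherent P s x (D.claim (x m)) (branch (x m))
  coherent : x (N + 1) ∉ D.attracted P → Coherent P s x D.region D.answer
  step : ∀ n > N, ¬ P.Moves n → IsChildIn D.arena (x n) (x (n + 1))
  mem_answer : x (N + 1) ∉ D.attracted P → ∀ n > N, ¬ P.Moves n →
    (N + 1 < n → x n ∈ D.answer) → x (n + 1) ∉ D.attracted P → x (n + 1) ∈ D.answer

theorem notMem_attracted (hU : ∀ n, x n ∉ D.target)
    (hstep : ∀ n > N, ¬ P.Moves n → IsChildIn D.arena (x n) (x (n + 1)))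
    (hx : ∀ n > N, P.Moves n → x (n + 1) = Strategy.ofPartial (D.move P s) (x n)) :
    ∀ n > N, x n ∉ D.attracted P := by
  intro n hn hmem
  have hown (i : ℕ) (hP : P.Moves (T.len (x (n + i)))) (hZ : x (n + i) ∈ D.attracted P) :
      x (n + (i + 1)) =
        attractorMove (IsChildIn D.arena) (fun p => P.Moves (T.len p)) D.target (x (n + i)) := by
    have hmove := move_of_notMem (P := P) (s := s) (n := n + i) hU
    rw [if_pos hZ] at hmove
    have hlegal := (attractorMove_spec hZ (hU (n + i)) hP).1.1
    rw [← hmove] at hlegal ⊢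
    rw [← Strategy.ofPartial_apply hlegal,
      ← hx (n + i) (by omega) (by simpa only [x.len] using hP), Nat.add_assoc]
  obtain ⟨i, hi⟩ := exists_mem_of_attractorMove (x := fun i => x (n + i)) hmem
    (fun i hP hZ _ => hown i hP hZ)
    fun i hP => hstep (n + i) (by omega) (by simpa only [x.len] using hP)
  exact hU _ hi

theorem IsSound.exists_lift (h : D.IsSound P s x)
    (hlow : ∀ n ≤ N, P.Moves n → x (n + 1) = (response s (x n) ∅ ∅).pos)
    (hx : ∀ n > N, P.Moves n → x (n + 1) = Strategy.ofPartial (D.move P s) (x n)) :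
    ∃ y : (auxTree hN E).Play, y.Follows P s ∧ (auxHom hN E).playMap y = x := by
  by_cases hhit : ∃ n, x n ∈ D.target
  · obtain ⟨m, hm, hleast⟩ := exists_isLeast hhit
    refine (h.coherent_claim m hm).exists_lift_of_branch hlow fun n hn hmn hP hv => ?_
    have hmove := move_of_isLeast (P := P) (s := s) (hleast n hmn)
    rw [hx n hn hP, Strategy.ofPartial_apply (hmove ▸ isChild_response hv), hmove]
  · push Not at hhit
    have havoid := notMem_attracted hhit h.step hx
    refine (h.coherent (havoid _ (by omega))).exists_lift hlow (fun n hn hP hv => ?_)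
      fun n hn hP hmem => h.mem_answer (havoid _ (by omega)) n hn hP hmem (havoid _ (by omega))
    have hmove := move_of_notMem (P := P) (s := s) (n := n) hhit
    rw [if_neg (havoid n hn)] at hmove
    rw [hx n hn hP, Strategy.ofPartial_apply (hmove ▸ isChild_response hv), hmove]

end Plan

theorem isQuasiStrategy_diff_attractor (P : Player) (S U : Set T.Pos) :
    IsQuasiStrategy P.opponent S
      (S \ attractor (IsChildIn S) (fun p => P.Moves (T.len p)) U) := by
  refine ⟨Set.sdiff_subset, fun p hp => ⟨fun hmoves => ?_, fun hmoves c hcS hc =>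
    ⟨hcS, step_notMem_attractor hp.2 ?_ ⟨hc, fun _ => hcS⟩⟩⟩⟩
  · rw [P.opponent_moves] at hmoves
    obtain ⟨c, hc, hcZ⟩ := exists_step_notMem_attractor hp.2 hmoves
    exact ⟨c, ⟨hc.2 hp.1, hcZ⟩, hc.1⟩
  · rwa [P.opponent_moves, not_not] at hmoves

/-- The plan of player one, when `S` is the set which `s` announces. -/
noncomputable def planOne (E S : Set T.Pos) : Plan T where
  arena := S
  target := S ∩ E
  claim _ := S
  region := S
  answer := S \ attractor (IsChildIn S) (fun p => Player.one.Moves (T.len p)) (S ∩ E)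

/-- When player one announces `S` on moving to `q`, the strategy `s` answers by claiming `u`. -/
def Claims (s : (auxTree hN E).Strategy) (q u : T.Pos) (S : Set T.Pos) : Prop :=
  IsQuasiStrategy .one Set.univ S ∧ q ∈ S ∧ u ∈ S ∩ E ∧ (response s q S ∅).answer = branch u

/-- The set of positions which `s` never claims against a suitable announcement at `q`, and from
which player two cannot force a visit to a position that she could have claimed. -/
noncomputable def unclaimed (s : (auxTree hN E).Strategy) (q : T.Pos) : Set T.Pos :=
  Set.univ \ attractor (IsChildIn Set.univ) (fun p => Player.two.Moves (T.len p))
    {u | ∃ S, Claims s q u S}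

/-- The plan of player two after the move to the position `q` of length `N + 1`. -/
noncomputable def planTwo (s : (auxTree hN E).Strategy) (q : T.Pos) : Plan T where
  arena := Set.univ
  target := {u | ∃ S, Claims s q u S}
  claim u := Classical.epsilon fun S => Claims s q u S
  region := unclaimed s q
  answer := (response s q (unclaimed s q) ∅).answer

variable {s s' : (auxTree hN E).Strategy} {x : T.Play}

theorem isSound_planOne (hx : x (N + 1) = (response s (x N) ∅ ∅).pos) :
    (planOne E (response s (x N) ∅ ∅).region).IsSound .one s x := by
  set S := (response s (x N) ∅ ∅).region
  obtain ⟨hS, hmem⟩ : IsQuasiStrategy .one Set.univ S ∧ x (N + 1) ∈ S := by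
    have hv := (response s (x N) ∅ ∅).valid.1 (by rw [← hx, x.len]; omega)
    rwa [← hx, x.ancestor_eq le_rfl] at hv
  have htwo : ¬ Player.one.Moves (N + 1) := fun h => Nat.even_add_one.1 h hN
  have hcoherent : ∀ R, IsAnswer E S R → Coherent .one s x S R := fun R hR =>
    ⟨hS, hmem, hR, fun _ => rfl, fun h => absurd h htwo⟩
  have hstay : ∀ n, ¬ Player.one.Moves n → x n ∈ S → x (n + 1) ∈ S := fun n hP hn =>
    (hS.2 _ hn).2 (by rwa [x.len]) _ trivial (x.isChild n)
  refine ⟨fun m hm => hcoherent _ (.inl ⟨x m, hm, rfl⟩), fun _ => hcoherent _ (.inr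
    ⟨isQuasiStrategy_diff_attractor .one S _, ?_⟩), fun n _ hP => ⟨x.isChild n, hstay n hP⟩,
    fun _ n hn hP hR hZ => ⟨hstay n hP ?_, hZ⟩⟩
  · exact Set.disjoint_left.2 fun p hp hpE => hp.2 (subset_attractor ⟨hp.1, hpE⟩)
  · rcases (show N + 1 ≤ n from hn).eq_or_lt with rfl | hlt
    exacts [hmem, (hR hlt).1]

theorem isQuasiStrategy_unclaimed (q : T.Pos) :
    IsQuasiStrategy .one Set.univ (unclaimed s q) :=
  isQuasiStrategy_diff_attractor .two Set.univ _

/-- A claim against the announcement of `unclaimed s q` would be a position of the target. -/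
theorem isQuasiStrategy_answer_unclaimed {q : T.Pos} (hlen : T.len q = N + 1)
    (hq : q ∈ unclaimed s q) :
    IsQuasiStrategy .two (unclaimed s q) (response s q (unclaimed s q) ∅).answer ∧
      Disjoint (response s q (unclaimed s q) ∅).answer E := by
  have hv : Valid N E q (unclaimed s q) ∅ :=
    ⟨fun _ => ⟨isQuasiStrategy_unclaimed q, by rwa [ancestor_of_len_le hlen.le]⟩,
      fun h => by omega⟩
  have hanswer := ((response s q (unclaimed s q) ∅).valid.2
    (by rw [(isChild_response hv).2]; omega)).1
  rw [region_response hv (by omega)] at hanswer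
  refine hanswer.resolve_left fun ⟨u, hu, hbranch⟩ => hu.1.2 (subset_attractor ?_)
  exact ⟨_, isQuasiStrategy_unclaimed q, hq, hu, hbranch⟩

theorem isSound_planTwo : (planTwo s (x (N + 1))).IsSound .two s x := by
  have hone : ¬ Player.two.Moves N := not_not.2 hN
  have htwo : Player.two.Moves (N + 1) := fun h => Nat.even_add_one.1 h hN
  have hanswer (hZ : x (N + 1) ∉ (planTwo s (x (N + 1))).attracted .two) :=
    isQuasiStrategy_answer_unclaimed (s := s) (x.len (N + 1)) ⟨trivial, hZ⟩
  refine ⟨fun m hm => ?_, fun hZ => ⟨isQuasiStrategy_unclaimed _, ⟨trivial, hZ⟩,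
    .inr (hanswer hZ), fun h => absurd h hone, fun _ => rfl⟩,
    fun n _ _ => ⟨x.isChild n, fun _ => trivial⟩, fun hZ n hn hP hR hZ' => ?_⟩
  · obtain ⟨hS, hmem, hu, hbranch⟩ := Classical.epsilon_spec hm
    exact ⟨hS, hmem, .inl ⟨x m, hu, rfl⟩, fun h => absurd h hone, fun _ => hbranch⟩
  · have hlt : N + 1 < n := lt_of_le_of_ne hn fun h => hP (h ▸ htwo)
    exact ((hanswer hZ).1.2 _ (hR hlt)).2 (by rwa [x.len]) _ ⟨trivial, hZ'⟩ (x.isChild n)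

/-- The plan which `P` adopts after the announcements, by looking back at what `s` plays then. -/
noncomputable def plan : Player → (auxTree hN E).Strategy → T.Pos → Plan T
  | .one, s, p => planOne E (response s (T.ancestor p N) ∅ ∅).region
  | .two, s, p => planTwo s (T.ancestor p (N + 1))

theorem plan_congr {p : T.Pos} (h : ∀ z, (auxTree hN E).len z ≤ T.len p → s z = s' z) :
    plan P s p = plan P s' p := by
  have hancestor (m : ℕ) : response s (T.ancestor p m) = response s' (T.ancestor p m) :=
    response_congr_strategy h (by rw [len_ancestor]; exact min_le_left _ _)
  cases P <;> simp only [plan, planTwo, unclaimed, Claims, hancestor]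

theorem plan_apply {n : ℕ} (hn : N < n) : plan P s (x n) = plan P s (x (N + 1)) := by
  cases P <;> simp only [plan, x.ancestor_eq hn, x.ancestor_eq hn.le, x.ancestor_eq le_rfl,
    x.ancestor_eq (Nat.le_succ N)]

/-- The strategy of `P` on `T` obtained from a strategy of the auxiliary game. -/
noncomputable def transfer (P : Player) (s : (auxTree hN E).Strategy) : T.Strategy :=
  .ofPartial fun p =>
    if T.len p ≤ N then (response s p ∅ ∅).pos else (plan P s p).move P s p

theorem transfer_apply_of_len_le {p : T.Pos} (hp : T.len p ≤ N) :
    transfer P s p = (response s p ∅ ∅).pos := by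
  have hmove : (if T.len p ≤ N then (response s p ∅ ∅).pos else (plan P s p).move P s p) =
      (response s p ∅ ∅).pos := if_pos hp
  rw [← hmove]
  exact Strategy.ofPartial_apply (by rw [hmove]; exact isChild_response (.of_len_le hp))

theorem transfer_apply_of_lt {n : ℕ} (hn : N < n) :
    transfer P s (x n) = Strategy.ofPartial ((plan P s (x (N + 1))).move P s) (x n) :=
  Strategy.ofPartial_congr <| by rw [if_neg (by rw [x.len]; omega), plan_apply hn]

theorem transfer_congr {p : T.Pos} (h : ∀ z, (auxTree hN E).len z ≤ T.len p → s z = s' z) :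
    transfer P s p = transfer P s' p :=
  Strategy.ofPartial_congr <| by
    simp only [Plan.move, plan_congr h, response_congr_strategy h le_rfl]

theorem exists_lift_of_follows_transfer (hx : x.Follows P (transfer P s)) :
    ∃ y : (auxTree hN E).Play, y.Follows P s ∧ (auxHom hN E).playMap y = x := by
  have hlow : ∀ n ≤ N, P.Moves n → x (n + 1) = (response s (x n) ∅ ∅).pos := fun n hn hP => by
    rw [hx n hP, transfer_apply_of_len_le (by rwa [x.len])]
  have hsound : (plan P s (x (N + 1))).IsSound P s x := by
    cases P with
    | one =>
      rw [plan, x.ancestor_eq (Nat.le_succ N)]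
      exact isSound_planOne (hlow N le_rfl hN)
    | two =>
      rw [plan, x.ancestor_eq le_rfl]
      exact isSound_planTwo
  exact hsound.exists_lift hlow fun n hn hP => by rw [hx n hP, transfer_apply_of_lt hn]

end Transfer

variable {T : GameTree.{u}} {N : ℕ}

/-- The auxiliary game covers `T`, without change to the positions at which nothing has been
announced yet. -/
noncomputable def auxCovering (hN : Even N) (E : Set T.Pos) {k : ℕ} (hk : k ≤ N) :
    Covering k (auxTree hN E) T where
  toHom := auxHom hN E
  bijOn := by
    refine ⟨fun z hz => hz, fun z hz w hw hpos => ?_, fun p hp =>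
      ⟨annotate p ∅ ∅ (.of_len_le (hp.trans hk)), hp, rfl⟩⟩
    have hz' : T.len z.pos ≤ N := hz.trans hk
    have hw' : T.len w.pos ≤ N := hw.trans hk
    exact AuxPos.ext hpos ((z.region_eq_empty hz').trans (w.region_eq_empty hw').symm)
      ((z.answer_eq_empty (by omega)).trans (w.answer_eq_empty (by omega)).symm)
  strat := transfer
  strat_congr := transfer_congr
  strat_map {P s z} hz := by
    have hlen : T.len z.pos ≤ N := hz.le.trans hk
    have hz_eq : z = annotate z.pos ∅ ∅ (.of_len_le hlen) :=
      AuxPos.eq_annotate rfl (fun h => by omega) fun h => by omega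
    refine (transfer_apply_of_len_le hlen).trans ?_
    rw [response_eq (.of_len_le hlen), ← hz_eq]
    rfl
  exists_lift := exists_lift_of_follows_transfer

/-- In the auxiliary game, the answer of player two decides whether the play reaches `E`. -/
theorem exists_mem_iff_answer {hN : Even N} {E : Set T.Pos}
    (hE : ∀ x : T.Play, ∀ m n, m ≤ n → x m ∈ E → x n ∈ E) (y : (auxTree hN E).Play) :
    (∃ n, (auxHom hN E).playMap y n ∈ E) ↔ ((y (N + 2)).answer ∩ E).Nonempty := by
  set x := (auxHom hN E).playMap y
  have hlen (n : ℕ) : T.len (y n).pos = n := x.len n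
  have hanswer : ∀ n ≥ N + 2, (y n).answer = (y (N + 2)).answer := fun n hn => by
    induction n, hn using Nat.le_induction with
    | base => rfl
    | succ n hn ih => rw [answer_eq_of_isChild (y.isChild n) (by rw [hlen]; omega), ih]
  have hmem : ∀ n ≥ N + 2, x n ∈ (y (N + 2)).answer := fun n hn =>
    hanswer n hn ▸ (y n).pos_mem_answer (by rw [hlen]; omega)
  constructor
  · rintro ⟨n, hn⟩
    exact ⟨x (max n (N + 2)), hmem _ (le_max_right _ _), hE x _ _ (le_max_left _ _) hn⟩
  · rintro ⟨p, hp, hpE⟩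
    rcases ((y (N + 2)).valid.2 (by rw [hlen]; omega)).1 with ⟨u, hu, hbranch⟩ | ⟨-, hdisj⟩
    · have hbranch_mem := hmem (max (T.len u) (N + 2)) (le_max_right _ _)
      rw [hbranch] at hbranch_mem
      have hxu := x.eq_of_mem_branch hbranch_mem.symm (le_max_left _ _)
      exact ⟨T.len u, hxu ▸ hu.2⟩
    · exact absurd hpE (Set.disjoint_left.1 hdisj hp)

theorem exists_covering_isClopen {O : Set T.Play} (hO : IsOpen O) (k : ℕ) :
    ∃ (S : GameTree.{u}) (c : Covering k S T), IsClopen (c.playMap ⁻¹' O) := by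
  have hN : Even (2 * k) := even_two_mul k
  let c := auxCovering hN (T.decided O) (show k ≤ 2 * k by omega)
  have hpre : c.playMap ⁻¹' O =
      {y | ((y (2 * k + 2)).answer ∩ T.decided O).Nonempty} := by
    ext y
    exact Iff.trans ⟨exists_mem_decided hO, fun ⟨n, hn⟩ => mem_of_mem_decided (T := T) hn⟩
      (exists_mem_iff_answer (fun x m n hmn => mem_decided_of_le hmn) y)
  have hdep : ∀ y y' : Play (auxTree hN (T.decided O)), y' (2 * k + 2) = y (2 * k + 2) →
      y ∈ c.playMap ⁻¹' O → y' ∈ c.playMap ⁻¹' O := fun y y' h hy => by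
    rw [hpre, Set.mem_ofPred_eq] at hy ⊢
    rwa [h]
  exact ⟨_, c, ⟨⟨Play.isOpen_of_forall_eq _ fun y y' h hy hy' => hy (hdep y' y h.symm hy')⟩,
    Play.isOpen_of_forall_eq _ hdep⟩⟩

end GameTree

/-! ### Inverse limits of coverings -/

theorem exists_thread {X : ℕ → Type*} (f : ∀ i, X (i + 1) → X i) (A : ∀ i, Set (X i)) (j : ℕ)
    (hA : ∀ i ≥ j, Set.SurjOn (f i) (A (i + 1)) (A i)) {a : X j} (ha : a ∈ A j) :
    ∃ p : ∀ i, X i, p j = a ∧ (∀ i, f i (p (i + 1)) = p i) ∧ ∀ i ≥ j, p i ∈ A i := by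
  induction j generalizing X with
  | zero =>
    choose g hgA hgf using fun i (b : A i) => hA i (Nat.zero_le i) b.2
    let p (i : ℕ) : A i := Nat.rec ⟨a, ha⟩ (fun i b => ⟨g i b, hgA i b⟩) i
    exact ⟨fun i => (p i).1, rfl, fun i => hgf i (p i), fun i _ => (p i).2⟩
  | succ j ih =>
    obtain ⟨p, hpj, hpf, hpA⟩ := ih (fun i => f (i + 1)) (fun i => A (i + 1))
      (fun i hi => hA (i + 1) (Nat.succ_le_succ hi)) ha
    refine ⟨fun | 0 => f 0 (p 0) | i + 1 => p i, hpj, ?_, ?_⟩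
    · rintro (_ | i)
      exacts [rfl, hpf i]
    · rintro (_ | i) hi
      exacts [absurd hi (by omega), hpA i (Nat.le_of_succ_le_succ hi)]

namespace GameTree

section Push

variable {S T : GameTree.{u}} (f : Hom S T) (k : ℕ) {s s' : S.Strategy}

/-- The strategy on `T` which plays like `s` at the images of the positions of length at most
`k`. -/
noncomputable def Hom.push (s : S.Strategy) : T.Strategy :=
  .ofPartial fun p => if h : ∃ q, S.len q ≤ k ∧ f.map q = p then f.map (s h.choose) else p

theorem Hom.push_map {f : Hom S T} {k : ℕ} (hf : Set.InjOn f.map {q | S.len q ≤ k}) {q : S.Pos}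
    (hq : S.len q ≤ k) : f.push k s (f.map q) = f.map (s q) := by
  have h : ∃ q', S.len q' ≤ k ∧ f.map q' = f.map q := ⟨q, hq, rfl⟩
  have hmove : (if h : ∃ q', S.len q' ≤ k ∧ f.map q' = f.map q then f.map (s h.choose)
      else f.map q) = f.map (s q) := by
    rw [dif_pos h, hf h.choose_spec.1 hq h.choose_spec.2]
  rw [← hmove]
  exact Strategy.ofPartial_apply (by rw [hmove]; exact f.isChild_map (s.isChild q))

theorem Hom.push_congr {p : T.Pos} (h : ∀ q, S.len q ≤ T.len p → s q = s' q) :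
    f.push k s p = f.push k s' p := by
  refine Strategy.ofPartial_congr ?_
  split_ifs with hp
  · rw [h _ ((f.len_map _).symm.trans_le (congrArg T.len hp.choose_spec.2).le)]
  · rfl

end Push

section Limit

variable {k : ℕ} {T : ℕ → GameTree.{u}} (c : ∀ i, Covering (k + i) (T (i + 1)) (T i))

/-- The positions of the inverse limit of a sequence of coverings. -/
@[ext]
structure Thread where
  toFun : ∀ i, (T i).Pos
  map_toFun : ∀ i, (c i).map (toFun (i + 1)) = toFun i

variable {c}

namespace Thread

theorem len_eq (p : Thread c) (i : ℕ) : (T i).len (p.toFun i) = (T 0).len (p.toFun 0) := by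
  induction i with
  | zero => rfl
  | succ i ih => rw [← ih, ← p.map_toFun i, (c i).len_map]

theorem eq_of_eq {p q : Thread c} {j : ℕ} (h : p.toFun j = q.toFun j)
    (hlen : (T j).len (p.toFun j) ≤ k + j) : p = q := by
  have hle : ∀ i ≤ j, p.toFun i = q.toFun i := fun i hi =>
    Nat.decreasingInduction (motive := fun i _ => p.toFun i = q.toFun i)
      (fun i _ ih => by rw [← p.map_toFun, ih, q.map_toFun]) h hi
  have hge : ∀ i ≥ j, p.toFun i = q.toFun i := fun i hi => by
    induction i, hi using Nat.le_induction with
    | base => exact h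
    | succ i hi ih =>
      have hpi := p.len_eq (i + 1)
      have hqi := q.len_eq (i + 1)
      rw [← hle 0 (Nat.zero_le j)] at hqi
      rw [p.len_eq] at hlen
      refine (c i).bijOn.injOn ?_ ?_ (by rw [p.map_toFun, q.map_toFun, ih]) <;>
        rw [Set.mem_ofPred_eq] <;> omega
  exact Thread.ext (funext fun i => (le_total i j).elim (hle i) (hge i))

theorem exists_toFun_eq {j : ℕ} {p : (T j).Pos} (hp : (T j).len p ≤ k + j) :
    ∃ q : Thread c, q.toFun j = p := by
  let A (i : ℕ) : Set (T i).Pos := {q | (T i).len q ≤ k + j}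
  have hsurj : ∀ i ≥ j, Set.SurjOn (c i).map (A (i + 1)) (A i) := fun i hi a ha => by
    have ha' : (T i).len a ≤ k + i := le_trans ha (Nat.add_le_add_left hi k)
    obtain ⟨b, -, rfl⟩ := (c i).bijOn.surjOn ha'
    exact ⟨b, ((c i).len_map b).symm.trans_le ha, rfl⟩
  obtain ⟨q, hqj, hq, -⟩ := exists_thread (fun i => (c i).map) A j hsurj hp
  exact ⟨⟨q, hq⟩, hqj⟩

/-- The parent of a thread, taken componentwise. -/
def parent (p : Thread c) : Thread c where
  toFun i := (T i).parent (p.toFun i)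
  map_toFun i := by rw [← (c i).parent_map, p.map_toFun]

end Thread

variable (c) in
/-- The inverse limit of a sequence of coverings which fix longer and longer positions. -/
def limit : GameTree.{u} where
  Pos := Thread c
  len p := (T 0).len (p.toFun 0)
  parent := Thread.parent
  root := ⟨fun i => (T i).root, fun i =>
    (T i).eq_root _ (by rw [(c i).len_map, (T (i + 1)).len_root])⟩
  len_root := (T 0).len_root
  eq_root p hp := Thread.ext (funext fun i => (T i).eq_root _ (by rw [p.len_eq, hp]))
  len_parent p := (T 0).len_parent _
  exists_child p := by
    let j := (T 0).len (p.toFun 0) + 1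
    have hpj : (T j).len (p.toFun j) + 1 = j := congrArg (· + 1) (p.len_eq j)
    obtain ⟨d, hd, hlen⟩ := (T j).exists_child (p.toFun j)
    obtain ⟨q, rfl⟩ := Thread.exists_toFun_eq (c := c) (j := j) (p := d) (by omega)
    refine ⟨q, (Thread.eq_of_eq hd.symm (by omega)).symm, ?_⟩
    rw [← q.len_eq j, hlen, hpj]

variable (c) in
/-- The projection of the inverse limit to the `i`-th game. -/
def proj (i : ℕ) : Hom (limit c) (T i) where
  map p := p.toFun i
  len_map p := p.len_eq i
  parent_map _ := rfl

theorem map_proj (i : ℕ) (p : (limit c).Pos) :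
    (c i).map ((proj c (i + 1)).map p) = (proj c i).map p :=
  p.map_toFun i

theorem playMap_comp_proj (i : ℕ) :
    (c i).playMap.comp (proj c (i + 1)).playMap = (proj c i).playMap :=
  ContinuousMap.ext fun x => Play.ext (funext fun n => map_proj i (x n))

theorem bijOn_proj (i : ℕ) :
    Set.BijOn (proj c i).map {p | (limit c).len p ≤ k + i} {p | (T i).len p ≤ k + i} := by
  refine ⟨fun p hp => ?_, fun p hp q _ h => Thread.eq_of_eq h ?_, fun p hp => ?_⟩
  · exact ((proj c i).len_map p).trans_le hp
  · exact ((proj c i).len_map p).trans_le hp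
  · obtain ⟨q, rfl⟩ := Thread.exists_toFun_eq (c := c) hp
    exact ⟨q, ((proj c i).len_map q).symm.trans_le hp, rfl⟩

variable (P : Player) (s : (limit c).Strategy)

/-- Approximations to the strategy on `T i` induced by `s`: play like `s` on the positions of
`T (i + d)` that are fixed by all later coverings, and transfer this to `T i`. -/
noncomputable def approxStrat : ℕ → ∀ i, (T i).Strategy
  | 0, i => (proj c i).push (k + i) s
  | d + 1, i => (c i).strat P (approxStrat d (i + 1))

/-- The strategy on `T i` induced by a strategy of the inverse limit. -/
noncomputable def limitStrat (i : ℕ) : (T i).Strategy where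
  toFun p := approxStrat P s ((T i).len p + 1) i p
  isChild p := (approxStrat P s ((T i).len p + 1) i).isChild p

variable {P s} {i d : ℕ}

theorem approxStrat_proj {q : (limit c).Pos} (hq : (limit c).len q < k + i) :
    approxStrat P s d i ((proj c i).map q) = (proj c i).map (s q) := by
  induction d generalizing i with
  | zero => exact Hom.push_map (bijOn_proj i).injOn hq.le
  | succ d ih =>
    rw [approxStrat, ← map_proj, (c i).strat_map (by rwa [(proj c (i + 1)).len_map]),
      ih (by omega), map_proj]

theorem approxStrat_add (e : ℕ) {p : (T i).Pos} (hp : (T i).len p < k + i + d) :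
    approxStrat P s (d + e) i p = approxStrat P s d i p := by
  induction d generalizing i with
  | zero =>
    obtain ⟨q, -, rfl⟩ := (bijOn_proj (c := c) i).surjOn hp.le
    rw [(proj c i).len_map] at hp
    rw [approxStrat_proj hp, approxStrat_proj hp]
  | succ d ih =>
    rw [Nat.add_right_comm]
    exact (c i).strat_congr fun q _ => ih (by omega)

theorem approxStrat_eq_limitStrat {p : (T i).Pos} (hp : (T i).len p < d) :
    approxStrat P s d i p = limitStrat P s i p := by
  obtain ⟨e, rfl⟩ := Nat.exists_eq_add_of_le hp
  exact approxStrat_add e (by omega)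

theorem strat_limitStrat (i : ℕ) : (c i).strat P (limitStrat P s (i + 1)) = limitStrat P s i := by
  refine Strategy.ext (funext fun p => ?_)
  rw [← approxStrat_eq_limitStrat (Nat.lt_add_of_pos_right two_pos)]
  exact (c i).strat_congr fun q hq => (approxStrat_eq_limitStrat (Nat.lt_succ_of_le hq)).symm

theorem approxStrat_congr {s' : (limit c).Strategy} {p : (T i).Pos}
    (h : ∀ q, (limit c).len q ≤ (T i).len p → s q = s' q) :
    approxStrat P s d i p = approxStrat P s' d i p := by
  induction d generalizing i with
  | zero => exact Hom.push_congr _ _ h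
  | succ d ih => exact (c i).strat_congr fun q hq => ih fun q' hq' => h q' (hq'.trans hq)

theorem exists_lift_of_follows_limitStrat {x : (T 0).Play} (hx : x.Follows P (limitStrat P s 0)) :
    ∃ y : (limit c).Play, y.Follows P s ∧ (proj c 0).playMap y = x := by
  let A (i : ℕ) : Set (T i).Play := {x | x.Follows P (limitStrat P s i)}
  have hsurj : ∀ i ≥ 0, Set.SurjOn (c i).playMap (A (i + 1)) (A i) := fun i _ x hx =>
    (c i).exists_lift ((strat_limitStrat (c := c) i).symm ▸ hx)
  obtain ⟨z, hz0, hz, hfollows⟩ := exists_thread (fun i => (c i).playMap) A 0 hsurj hx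
  let y : (limit c).Play :=
    ⟨fun n => ⟨fun i => z i n, fun i => congrArg (fun x : (T i).Play => x n) (hz i)⟩,
      Thread.ext (funext fun i => (z i).map_zero), fun n =>
      ⟨Thread.ext (funext fun i => ((z i).isChild n).1), ((z 0).isChild n).2⟩⟩
  refine ⟨y, fun n hn => (bijOn_proj (n + 1)).injOn ?_ ?_ ?_, hz0⟩
  · rw [Set.mem_ofPred_eq, y.len]
    omega
  · rw [Set.mem_ofPred_eq, (s.isChild _).2, y.len]
    omega
  · rw [← approxStrat_proj (P := P) (d := n + 1) (by rw [y.len]; omega),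
      approxStrat_eq_limitStrat (by rw [(proj c _).len_map, y.len]; omega)]
    exact hfollows (n + 1) (Nat.zero_le _) n hn

variable (c) in
/-- The inverse limit covers the first game. -/
noncomputable def limitCovering : Covering k (limit c) (T 0) where
  toHom := proj c 0
  bijOn := bijOn_proj 0
  strat P s := limitStrat P s 0
  strat_congr := approxStrat_congr
  strat_map hp := (approxStrat_eq_limitStrat (d := _ + 1) (Nat.lt_succ_self _)).symm.trans
    (approxStrat_proj hp)
  exists_lift := exists_lift_of_follows_limitStrat

end Limit

end GameTree

/-! ### Borel determinacy of sequential games -/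

namespace GameTree

/-- Martin's unravelability, for every payoff which is the preimage of `O` under a continuous
function `f` on plays: some covering which fixes the positions of length at most `k` makes the
payoff clopen. -/
def Unravelable {α : Type*} [TopologicalSpace α] (O : Set α) : Prop :=
  ∀ (S : GameTree.{u}) (f : C(S.Play, α)) (k : ℕ),
    ∃ (R : GameTree.{u}) (d : Covering k R S), IsClopen (f.comp d.playMap ⁻¹' O)

namespace Unravelable

variable {α : Type*} [TopologicalSpace α] {O : Set α}

theorem of_isOpen (hO : IsOpen O) : Unravelable.{u} O := fun _ f k =>
  exists_covering_isClopen (hO.preimage f.continuous) k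

theorem compl (hO : Unravelable.{u} O) : Unravelable.{u} Oᶜ := fun S f k => by
  obtain ⟨R, d, hd⟩ := hO S f k
  exact ⟨R, d, hd.compl⟩

theorem iUnion {O : ℕ → Set α} (hO : ∀ i, Unravelable.{u} (O i)) :
    Unravelable.{u} (⋃ i, O i) := fun S f k => by
  choose R d hd using hO
  let seq (i : ℕ) : Σ S : GameTree.{u}, C(S.Play, α) := Nat.rec ⟨S, f⟩
    (fun i X => ⟨R i X.1 X.2 (k + i), X.2.comp (d i X.1 X.2 (k + i)).playMap⟩) i
  let T (i : ℕ) : GameTree.{u} := (seq i).1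
  let c (i : ℕ) : Covering (k + i) (T (i + 1)) (T i) := d i (seq i).1 (seq i).2 (k + i)
  let g : C((limit c).Play, α) := f.comp (proj c 0).playMap
  have hg (i : ℕ) : (seq i).2.comp (proj c i).playMap = g := by
    induction i with
    | zero => rfl
    | succ i ih =>
      rw [← ih, ← playMap_comp_proj (c := c) i]
      rfl
  have hclopen (i : ℕ) : IsClopen (g ⁻¹' O i) := by
    rw [← hg (i + 1)]
    exact (hd i (seq i).1 (seq i).2 (k + i)).preimage (proj c (i + 1)).playMap.continuous
  have hopen : IsOpen (g ⁻¹' ⋃ i, O i) := by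
    rw [Set.preimage_iUnion]
    exact isOpen_iUnion fun i => (hclopen i).isOpen
  obtain ⟨L, e, he⟩ := exists_covering_isClopen hopen k
  exact ⟨L, (limitCovering c).comp e, he⟩

theorem of_measurableSet (hO : MeasurableSet[borel α] O) : Unravelable.{u} O := by
  induction O, hO using MeasurableSpace.generateFrom_induction with
  | hC O hO => exact of_isOpen hO
  | empty => exact of_isOpen isOpen_empty
  | compl O _ ih => exact ih.compl
  | iUnion O _ ih => exact iUnion ih

end Unravelable

theorem determined_of_measurableSet {T : GameTree.{u}} {O : Set T.Play}
    (hO : MeasurableSet[borel T.Play] O) : T.Determined O := by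
  obtain ⟨S, c, hc⟩ := Unravelable.of_measurableSet hO T (.id _) 0
  exact c.determined (determined_of_isOpen hc.isOpen)

end GameTree

/-! ### Games with alternating actions -/

/-- The list of the first `n` terms of a sequence. -/
def initSeg {α : Type*} (f : ℕ → α) (n : ℕ) : List α :=
  List.ofFn fun i : Fin n => f i

theorem length_initSeg {α : Type*} (f : ℕ → α) (n : ℕ) : (initSeg f n).length = n :=
  List.length_ofFn

theorem initSeg_succ {α : Type*} (f : ℕ → α) (n : ℕ) : initSeg f (n + 1) = initSeg f n ++ [f n] :=
  List.ofFn_succ_last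

theorem take_initSeg {α : Type*} (f : ℕ → α) {i n : ℕ} (h : i ≤ n) :
    (initSeg f n).take i = initSeg f i := by
  induction n, h using Nat.le_induction with
  | base => exact List.take_of_length_le (length_initSeg f i).le
  | succ n hin ih =>
    rw [initSeg_succ, List.take_append_of_le_length (by rwa [length_initSeg]), ih]

section Alternating

variable {A B : Type u} [Nonempty A] [Nonempty B]

variable (A B) in
/-- The game in which player one chooses actions in `A` and player two replies with actions in `B`.
A position consists of the rounds played so far, in chronological order, and of the action of player
one in the current round if it has been chosen. -/
def actionTree : GameTree.{u} where
  Pos := List (A × B) × Option A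
  len p := 2 * p.1.length + p.2.toList.length
  parent
    | (h, some _) => (h, none)
    | (h, none) => (h.dropLast, h.getLast?.map Prod.fst)
  root := ([], none)
  len_root := rfl
  eq_root := by
    rintro ⟨h, o⟩ hlen
    dsimp only at hlen
    obtain rfl : h = [] := List.eq_nil_of_length_eq_zero (by omega)
    cases o
    exacts [rfl, absurd hlen (by simp)]
  len_parent := by
    rintro ⟨h, _ | a⟩
    · rcases h.eq_nil_or_concat with rfl | ⟨h, m, rfl⟩
      · rfl
      · simp [Nat.mul_add]
    · rfl
  exists_child := by
    rintro ⟨h, _ | a⟩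
    · exact ⟨(h, some (Classical.arbitrary A)), rfl, rfl⟩
    · exact ⟨(h ++ [(a, Classical.arbitrary B)], none), by simp, by simp [Nat.mul_add]⟩

theorem actionTree_isChild_none {h : List (A × B)} {c : (actionTree A B).Pos} :
    (actionTree A B).IsChild (h, none) c ↔ ∃ a, c = (h, some a) := by
  refine ⟨?_, by rintro ⟨a, rfl⟩; exact ⟨rfl, rfl⟩⟩
  obtain ⟨h', _ | a⟩ := c
  · rintro ⟨-, hlen⟩
    have hlen : 2 * h'.length = 2 * h.length + 1 := hlen
    omega
  · rintro ⟨hpar, -⟩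
    exact ⟨a, congrArg (·.1, some a) hpar⟩

theorem actionTree_isChild_some {h : List (A × B)} {a : A} {c : (actionTree A B).Pos} :
    (actionTree A B).IsChild (h, some a) c ↔ ∃ b, c = (h ++ [(a, b)], none) := by
  refine ⟨?_, ?_⟩
  · obtain ⟨h', _ | a'⟩ := c
    · rintro ⟨hpar, -⟩
      rcases h'.eq_nil_or_concat with rfl | ⟨h', ⟨a', b⟩, rfl⟩ <;>
        simp_all [actionTree]
    · rintro ⟨hpar, -⟩
      simp [actionTree] at hpar
  · rintro ⟨b, rfl⟩
    exact ⟨by simp [actionTree], by simp [actionTree, Nat.mul_add]⟩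

/-- The play of `actionTree A B` in which the rounds are given by `f`. -/
def actionPlay (f : ℕ → A × B) : (actionTree A B).Play where
  toFun n := (initSeg f (n / 2), if Even n then none else some (f (n / 2)).1)
  map_zero := rfl
  isChild n := by
    obtain ⟨m, rfl | rfl⟩ := n.even_or_odd'
    · have hdiv : (2 * m + 1) / 2 = m := by omega
      rw [if_pos (even_two_mul m), if_neg (by simp), hdiv, Nat.mul_div_cancel_left m two_pos]
      exact actionTree_isChild_none.2 ⟨_, rfl⟩
    · have hdiv : (2 * m + 1) / 2 = m := by omega
      have hdiv' : (2 * m + 1 + 1) / 2 = m + 1 := by omega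
      rw [if_neg (by simp), if_pos (by simp [parity_simps]), hdiv, hdiv', initSeg_succ]
      exact actionTree_isChild_some.2 ⟨_, rfl⟩

theorem actionPlay_two_mul (f : ℕ → A × B) (n : ℕ) :
    actionPlay f (2 * n) = (initSeg f n, none) := by
  simp only [actionPlay, even_two_mul, if_true, Nat.mul_div_cancel_left n two_pos]
  rfl

theorem actionPlay_two_mul_add_one (f : ℕ → A × B) (n : ℕ) :
    actionPlay f (2 * n + 1) = (initSeg f n, some (f n).1) := by
  have hdiv : (2 * n + 1) / 2 = n := by omega
  simp only [actionPlay, Nat.not_even_bit1, if_false, hdiv]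
  rfl

/-- The sequence of rounds of a play of `actionTree A B`. -/
noncomputable def rounds (x : (actionTree A B).Play) (n : ℕ) : A × B :=
  (x (2 * (n + 1))).1.getLast?.getD (Classical.arbitrary _)

theorem rounds_actionPlay (f : ℕ → A × B) : rounds (actionPlay f) = f := by
  funext n
  simp [rounds, actionPlay_two_mul, initSeg_succ]

theorem continuous_rounds [TopologicalSpace A] [TopologicalSpace B] :
    Continuous (rounds : (actionTree A B).Play → ℕ → A × B) :=
  continuous_pi fun _ => GameTree.Play.continuous_apply_comp
    (fun p : (actionTree A B).Pos => p.1.getLast?.getD (Classical.arbitrary _)) _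

theorem exists_forall_mem_or_exists_forall_notMem [TopologicalSpace A] [TopologicalSpace B]
    {W : Set (ℕ → A × B)} (hW : MeasurableSet[borel (ℕ → A × B)] W) :
    (∃ α : List (A × B) → A, ∀ f : ℕ → A × B, (∀ n, (f n).1 = α (initSeg f n)) → f ∈ W) ∨
      ∃ β : List (A × B) → A → B,
        ∀ f : ℕ → A × B, (∀ n, (f n).2 = β (initSeg f n) (f n).1) → f ∉ W := by
  refine (GameTree.determined_of_measurableSet (continuous_rounds.borel_measurable hW)).imp ?_ ?_
  · rintro ⟨s, hs⟩
    choose α hα using fun h => actionTree_isChild_none.1 (s.isChild (h, none))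
    refine ⟨α, fun f hf => ?_⟩
    rw [← rounds_actionPlay f]
    refine hs _ fun n hn => ?_
    obtain ⟨m, rfl⟩ := hn.two_dvd
    rw [actionPlay_two_mul, actionPlay_two_mul_add_one, hα, hf]
  · rintro ⟨s, hs⟩
    choose β hβ using fun h a => actionTree_isChild_some.1 (s.isChild (h, some a))
    refine ⟨β, fun f hf => ?_⟩
    rw [← rounds_actionPlay f]
    refine hs _ fun n hn => ?_
    obtain ⟨m, rfl⟩ := Nat.not_even_iff_odd.1 hn
    rw [actionPlay_two_mul_add_one, hβ, ← hf]
    exact (actionPlay_two_mul f (m + 1)).trans (by rw [initSeg_succ])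

end Alternating

/-! ### Least histories and their limits -/

section Shortlex

variable {α : Type*} {r : α → α → Prop}

theorem eventually_const_of_wellFounded (hr : WellFounded r) {f : ℕ → α}
    (hf : ∀ n, f (n + 1) = f n ∨ r (f (n + 1)) (f n)) : ∃ N, ∀ n, N ≤ n → f n = f N := by
  obtain ⟨_, ⟨N, rfl⟩, hmin⟩ := hr.has_min (Set.range f) (Set.range_nonempty f)
  refine ⟨N, fun n hn => ?_⟩
  induction n, hn using Nat.le_induction with
  | base => rfl
  | succ n _ ih => exact ih ▸ (hf n).resolve_right fun h => hmin _ ⟨n + 1, rfl⟩ (ih ▸ h)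

theorem lex_append_of_length_eq {s s' : List α} (h : List.Lex r s s') (hlen : s.length = s'.length)
    (t t' : List α) : List.Lex r (s ++ t) (s' ++ t') := by
  induction h with
  | nil => simp at hlen
  | cons _ ih => exact .cons (ih (Nat.succ.inj hlen))
  | rel h => exact .rel h

theorem take_eq_or_shortlex_take [Std.Trichotomous r] {s s' : List α}
    (h : ¬ List.Shortlex r s' s) (hlen : s.length = s'.length) (i : ℕ) :
    s.take i = s'.take i ∨ List.Shortlex r (s.take i) (s'.take i) := by
  have hlen' : (s'.take i).length = (s.take i).length := by
    rw [List.length_take, List.length_take, hlen]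
  rcases trichotomous_of (List.Shortlex r) (s.take i) (s'.take i) with hlt | heq | hgt
  · exact .inr hlt
  · exact .inl heq
  · have hlex := lex_append_of_length_eq ((List.shortlex_iff_lex hlen').1 hgt) hlen'
      (s'.drop i) (s.drop i)
    rw [List.take_append_drop, List.take_append_drop] at hlex
    exact absurd (.of_lex hlen.symm hlex) h

theorem eventually_take_const [IsWellOrder α r] {H : ℕ → List α} (hlen : ∀ n, (H n).length = n)
    (hH : ∀ n, ∃ m, ¬ List.Shortlex r (H n ++ [m]) (H (n + 1))) (i : ℕ) :
    ∃ N, i ≤ N ∧ ∀ n, N ≤ n → (H n).take i = (H N).take i := by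
  have hstep (n : ℕ) : (H (i + n + 1)).take i = (H (i + n)).take i ∨
      List.Shortlex r ((H (i + n + 1)).take i) ((H (i + n)).take i) := by
    obtain ⟨m, hm⟩ := hH (i + n)
    have := take_eq_or_shortlex_take hm (by simp [hlen]) i
    rwa [List.take_append_of_le_length (by simp [hlen])] at this
  obtain ⟨N, hN⟩ := eventually_const_of_wellFounded
    (f := fun n => (H (i + n)).take i) (List.Shortlex.wf IsWellFounded.wf) hstep
  refine ⟨i + N, by omega, fun n hn => ?_⟩
  obtain ⟨j, rfl⟩ := Nat.exists_eq_add_of_le (show i ≤ n by omega)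
  exact hN j (by omega)

theorem exists_initSeg_eq_take [IsWellOrder α r] {H : ℕ → List α} (hlen : ∀ n, (H n).length = n)
    (hH : ∀ n, ∃ m, ¬ List.Shortlex r (H n ++ [m]) (H (n + 1))) :
    ∃ f : ℕ → α, ∀ i, ∃ n, i ≤ n ∧ initSeg f i = (H n).take i := by
  choose N hiN hN using eventually_take_const hlen hH
  have hsucc (i : ℕ) : ∃ m, (H (N (i + 1))).take (i + 1) = (H (N i)).take i ++ [m] := by
    have hi : i < (H (max (N i) (N (i + 1)))).length := by
      rw [hlen]
      exact lt_max_of_lt_right (hiN (i + 1))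
    refine ⟨(H (max (N i) (N (i + 1))))[i], ?_⟩
    rw [← hN (i + 1) _ (le_max_right (N i) _), ← hN i _ (le_max_left _ (N (i + 1))),
      List.take_succ_eq_append_getElem hi]
  choose f hf using hsucc
  refine ⟨f, fun i => ⟨N i, hiN i, ?_⟩⟩
  induction i with
  | zero => rfl
  | succ i ih => rw [initSeg_succ, ih, hf]

theorem eq_of_forall_initSeg_eq {f g : ℕ → α} (h : ∀ n, initSeg f n = initSeg g n) : f = g := by
  funext n
  have hsucc := h (n + 1)
  rw [initSeg_succ, initSeg_succ, h n] at hsucc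
  exact List.singleton_inj.1 (List.append_cancel_left hsucc)

end Shortlex

theorem colorHist_eq_initSeg {Q K : Type u} (col : Q → Q → K) (π : ℕ → Q) (n : ℕ) :
    colorHist col π n = initSeg (colorSeq col π) n := rfl

section Selector

variable {M Q K : Type u} (q0 : Q) (step : Q → M → Q) (col : Q → Q → K)
  (ok : List M → M → Prop)

/-- The states visited when the joint actions are given by the sequence `f`. -/
def run (f : ℕ → M) : ℕ → Q
  | 0 => q0
  | n + 1 => step (run f n) (f n)

/-- `Realizes q0 step col ok h c q` means that the history `h` of joint actions, each of which is
allowed by `ok` after the preceding ones, leads from `q0` to `q` and produces the colors `c`. -/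
inductive Realizes : List M → List K → Q → Prop
  | nil : Realizes [] [] q0
  | snoc {h : List M} {c : List K} {q : Q} (m : M) :
      Realizes h c q → ok h m → Realizes (h ++ [m]) (c ++ [col q (step q m)]) (step q m)

variable {q0 step col ok}

namespace Realizes

variable {h : List M} {c : List K} {q : Q}

theorem length_eq (hr : Realizes q0 step col ok h c q) : h.length = c.length := by
  induction hr with
  | nil => rfl
  | snoc _ _ _ ih => rw [List.length_append, List.length_append, ih]; rfl

theorem take (hr : Realizes q0 step col ok h c q) (i : ℕ) :
    ∃ q', Realizes q0 step col ok (h.take i) (c.take i) q' := by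
  induction hr with
  | nil => exact ⟨q0, by simpa using .nil⟩
  | @snoc h c q m hr hm ih =>
    rcases le_or_gt i h.length with hi | hi
    · rwa [List.take_append_of_le_length hi, List.take_append_of_le_length (hr.length_eq ▸ hi)]
    · have hi' : c.length < i := hr.length_eq ▸ hi
      rw [List.take_of_length_le (by simpa using hi), List.take_of_length_le (by simpa using hi')]
      exact ⟨_, hr.snoc m hm⟩

theorem exists_of_append_singleton {m : M} (hr : Realizes q0 step col ok (h ++ [m]) c q) :
    ∃ c' q', Realizes q0 step col ok h c' q' ∧ ok h m ∧ c = c' ++ [col q' (step q' m)] ∧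
      q = step q' m := by
  generalize hs : h ++ [m] = s at hr
  cases hr with
  | nil => simp at hs
  | snoc m' hr hm =>
    obtain ⟨rfl, rfl⟩ := List.append_singleton_inj.1 hs
    exact ⟨_, _, hr, hm, rfl, rfl⟩

theorem eq_run {f : ℕ → M} {n : ℕ} (hr : Realizes q0 step col ok (initSeg f n) c q) :
    c = colorHist col (run q0 step f) n ∧ q = run q0 step f n := by
  induction n generalizing c q with
  | zero =>
    generalize hs : initSeg f 0 = s at hr
    cases hr with
    | nil => exact ⟨rfl, rfl⟩
    | snoc => simp [initSeg] at hs
  | succ n ih =>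
    rw [initSeg_succ] at hr
    obtain ⟨c', q', hr', -, rfl, rfl⟩ := hr.exists_of_append_singleton
    obtain ⟨rfl, rfl⟩ := ih hr'
    exact ⟨initSeg_succ (colorSeq col (run q0 step f)) n |>.symm, rfl⟩

theorem snoc_colorHist {π : ℕ → Q} {n : ℕ} {m : M}
    (hr : Realizes q0 step col ok h (colorHist col π n) (π n)) (hm : ok h m)
    (hπ : π (n + 1) = step (π n) m) :
    Realizes q0 step col ok (h ++ [m]) (colorHist col π (n + 1)) (π (n + 1)) := by
  rw [colorHist_eq_initSeg, initSeg_succ, colorSeq, hπ]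
  exact hr.snoc m hm

theorem ok_and_colorSeq_run_eq {f : ℕ → M} {π : ℕ → Q}
    (hr : ∀ n, ∃ q, Realizes q0 step col ok (initSeg f n) (colorHist col π n) q) :
    (∀ n, ok (initSeg f n) (f n)) ∧ colorSeq col (run q0 step f) = colorSeq col π := by
  refine ⟨fun n => ?_, eq_of_forall_initSeg_eq fun n => ?_⟩
  · obtain ⟨q, hq⟩ := hr (n + 1)
    rw [initSeg_succ] at hq
    obtain ⟨-, -, -, hok, -⟩ := hq.exists_of_append_singleton
    exact hok
  · obtain ⟨q, hq⟩ := hr n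
    exact hq.eq_run.1.symm

variable (q0 step col ok c q) in
theorem exists_least : ∃ h₀, ∀ h, Realizes q0 step col ok h c q →
    Realizes q0 step col ok h₀ c q ∧ ¬ List.Shortlex WellOrderingRel h h₀ := by
  by_cases hne : ∃ h, Realizes q0 step col ok h c q
  · have hwf : WellFounded (List.Shortlex (WellOrderingRel (α := M))) :=
      List.Shortlex.wf IsWellFounded.wf
    obtain ⟨h₀, hr, hmin⟩ := hwf.has_min _ hne
    exact ⟨h₀, fun h hh => ⟨hr, hmin h hh⟩⟩
  · exact ⟨[], fun h hh => absurd ⟨h, hh⟩ hne⟩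

end Realizes

variable (q0 step col ok) in
theorem exists_history_selector :
    ∃ pick : List K → Q → List M, ∀ π : ℕ → Q, π 0 = q0 →
      (∀ n, ∃ m, ok (pick (colorHist col π n) (π n)) m ∧ π (n + 1) = step (π n) m) →
      ∃ f : ℕ → M, (∀ n, ok (initSeg f n) (f n)) ∧
        colorSeq col (run q0 step f) = colorSeq col π := by
  choose pick hpick using Realizes.exists_least q0 step col ok
  refine ⟨pick, fun π hzero hsucc => ?_⟩
  choose m hm hπ using hsucc
  have hreal (n : ℕ) :
      Realizes q0 step col ok (pick (colorHist col π n) (π n)) (colorHist col π n) (π n) := by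
    induction n with
    | zero => exact (hpick _ _ [] (hzero ▸ .nil)).1
    | succ n ih => exact (hpick _ _ _ (ih.snoc_colorHist (hm n) (hπ n))).1
  have hlen (n : ℕ) : (pick (colorHist col π n) (π n)).length = n := by
    rw [(hreal n).length_eq, colorHist_eq_initSeg, length_initSeg]
  obtain ⟨f, hf⟩ := exists_initSeg_eq_take hlen fun n =>
    ⟨m n, (hpick _ _ _ ((hreal n).snoc_colorHist (hm n) (hπ n))).2⟩
  refine ⟨f, Realizes.ok_and_colorSeq_run_eq fun i => ?_⟩
  obtain ⟨n, hin, hn⟩ := hf i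
  rw [hn, colorHist_eq_initSeg col π i, ← take_initSeg _ hin]
  exact (hreal n).take i

end Selector

/-! ### From concurrent to alternating games -/

section Concurrent

variable {A B Q K : Type u}

theorem continuous_run [TopologicalSpace A] [DiscreteTopology A] [TopologicalSpace Q]
    [DiscreteTopology Q] (q0 : Q) (step : Q → A → Q) (n : ℕ) :
    Continuous fun f => run q0 step f n := by
  induction n with
  | zero => exact continuous_const
  | succ n ih =>
    exact (continuous_of_discreteTopology (f := fun p : Q × A => step p.1 p.2)).comp
      (ih.prodMk (continuous_apply n))

theorem continuous_colorSeq_run [TopologicalSpace A] [DiscreteTopology A] [TopologicalSpace K]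
    (q0 : Q) (step : Q → A → Q) (col : Q → Q → K) :
    Continuous fun f => colorSeq col (run q0 step f) := by
  let _ : TopologicalSpace Q := ⊥
  have : DiscreteTopology Q := ⟨rfl⟩
  exact continuous_pi fun n =>
    (continuous_of_discreteTopology (f := fun p : Q × Q => col p.1 p.2)).comp
      ((continuous_run q0 step n).prodMk (continuous_run q0 step (n + 1)))

theorem isOpen_cyl [TopologicalSpace K] [DiscreteTopology K] (w : List K) : IsOpen (Cyl w) := by
  have hcyl : Cyl w = ⋂ i : Fin w.length, (fun ρ : ℕ → K => ρ i) ⁻¹' {w.get i} := by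
    ext ρ
    simp [Cyl, Fin.forall_iff]
  rw [hcyl]
  exact isOpen_iInter_of_finite fun i => (isOpen_discrete _).preimage (continuous_apply _)

theorem borelSeq_le_borel [TopologicalSpace K] [DiscreteTopology K] :
    BorelSeq K ≤ borel (ℕ → K) :=
  MeasurableSpace.generateFrom_le fun _ ⟨w, hw⟩ =>
    MeasurableSpace.measurableSet_generateFrom (hw ▸ isOpen_cyl w)

theorem exists_forall_colorSeq_mem_or_exists_forall_colorSeq_notMem [Nonempty A] [Nonempty B]
    (q0 : Q) (step : Q → A × B → Q) (col : Q → Q → K) {W : Set (ℕ → K)}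
    (hW : MeasurableSet[BorelSeq K] W) :
    (∃ α : List (A × B) → A, ∀ f : ℕ → A × B, (∀ n, (f n).1 = α (initSeg f n)) →
        colorSeq col (run q0 step f) ∈ W) ∨
      ∃ β : List (A × B) → A → B, ∀ f : ℕ → A × B, (∀ n, (f n).2 = β (initSeg f n) (f n).1) →
        colorSeq col (run q0 step f) ∉ W := by
  let _ : TopologicalSpace A := ⊥
  let _ : TopologicalSpace B := ⊥
  let _ : TopologicalSpace K := ⊥
  have : DiscreteTopology A := ⟨rfl⟩
  have : DiscreteTopology B := ⟨rfl⟩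
  have : DiscreteTopology K := ⟨rfl⟩
  exact exists_forall_mem_or_exists_forall_notMem
    ((continuous_colorSeq_run q0 step col).borel_measurable (borelSeq_le_borel W hW))

theorem exists_forall_exists_eq_of_gfDetermined {ρ : A → B → Q} (hρ : GFDetermined ρ)
    (β : A → B) : ∃ b, ∀ a, ∃ a', ρ a b = ρ a' (β a') := by
  rcases hρ {p | ∀ a', p ≠ ρ a' (β a')} with ⟨a, ha⟩ | ⟨b, hb⟩
  · exact absurd rfl (ha (β a) a)
  · exact ⟨b, fun a => by simpa using hb a⟩

end Concurrent

end BorelDeterminacy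

/-- Borel determinacy of locally determined deterministic concurrent games:
if every local interaction of the deterministic concurrent arena
`C = ⟨A, B, Q, q0, δ, K, col⟩` is a determined game form and `W ⊆ K^ω` is Borel,
then either Player A or Player B has a winning color strategy in `⟨C, W⟩`. -/
theorem stmt1 {A B Q K : Type u} [Nonempty A] [Nonempty B] [Nonempty Q] [Nonempty K]
    (q0 : Q) (δ : Q → A → B → Q) (col : Q → Q → K)
    (hloc : ∀ q : Q, GFDetermined (δ q))
    (W : Set (ℕ → K)) (hW : MeasurableSet[BorelSeq K] W) :
    (∃ sA : List K → Q → A, WinA q0 δ col W sA) ∨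
    (∃ sB : List K → Q → B, WinB q0 δ col W sB) := by
  rcases BorelDeterminacy.exists_forall_colorSeq_mem_or_exists_forall_colorSeq_notMem q0
    (fun q (m : A × B) => δ q m.1 m.2) col hW with ⟨α, hα⟩ | ⟨β, hβ⟩
  · obtain ⟨pick, hpick⟩ := BorelDeterminacy.exists_history_selector q0
      (fun q (m : A × B) => δ q m.1 m.2) col fun h m => m.1 = α h
    refine .inl ⟨fun c q => α (pick c q), fun π ⟨hzero, hsucc⟩ => ?_⟩
    obtain ⟨f, hf, hcol⟩ := hpick π hzero fun n =>
      let ⟨b, hb⟩ := hsucc n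
      ⟨(_, b), rfl, hb⟩
    exact hcol ▸ hα f hf
  · obtain ⟨pick, hpick⟩ := BorelDeterminacy.exists_history_selector q0
      (fun q (m : A × B) => δ q m.1 m.2) col fun h m => m.2 = β h m.1
    choose sB hsB using fun c q => BorelDeterminacy.exists_forall_exists_eq_of_gfDetermined (hloc q)
      (β (pick c q))
    refine .inr ⟨sB, fun π ⟨hzero, hsucc⟩ => ?_⟩
    obtain ⟨f, hf, hcol⟩ := hpick π hzero fun n =>
      let ⟨a, ha⟩ := hsucc n
      let ⟨a', ha'⟩ := hsB _ _ a
      ⟨(a', _), rfl, ha.trans ha'⟩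
    exact hcol ▸ hβ f hf
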